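/- (Conditional CLT in the block-diagonal case.) Assume (H1'), (H2) and (H3) as above, fix j with p_0^{(j)} = Tr(P_j ρ) > 0, and let (ρ_n, X_n)_{n≥0} be the quantum trajectory process under ℙ_ρ. Set m^{(j)} = Σ_{i=1}^{2d} Tr(A_i ρ_∞^{(j)} A_i^*) e_i ∈ ℝ^d. Then, conditionally on the event {p_∞^{(j)} = 1} (i.e. under ℙ_ρ[ · | p_∞^{(j)} = 1 ]), the process (X_n − n m^{(j)})/√n converges in distribution to the Gaussian N(0, C^{(j)}) on ℝ^d, where C^{(j)} is the covariance matrix of the main Central Limit Theorem computed for the family (A_i^{(j)})_{i=1}^{2d} on E_j with invariant state ρ_∞^{(j)}: C^{(j)}_{rs} = δ_{rs}( Tr(A_r^{(j)} ρ_∞^{(j)} A_r^{(j)*}) + Tr(A_{r+d}^{(j)} ρ_∞^{(j)} A_{r+d}^{(j)*}) ) − m_r^{(j)} m_s^{(j)} + ( Tr(A_r^{(j)} ρ_∞^{(j)} A_r^{(j)*} L_s^{(j)}) + Tr(A_s^{(j)} ρ_∞^{(j)} A_s^{(j)*} L_r^{(j)}) − Tr(A_{r+d}^{(j)} ρ_∞^{(j)}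 A_{r+d}^{(j)*} L_s^{(j)}) − Tr(A_{s+d}^{(j)} ρ_∞^{(j)} A_{s+d}^{(j)*} L_r^{(j)}) ) − ( m_r^{(j)} Tr(ρ_∞^{(j)} L_s^{(j)}) + m_s^{(j)} Tr(ρ_∞^{(j)} L_r^{(j)}) ), with L_r^{(j)} an operator on E_j solving L_r^{(j)} − L^{(j)*}(L_r^{(j)}) = Σ_{i=1}^{2d} (e_i·e_r) A_i^{(j)*} A_i^{(j)} − m_r^{(j)} I_{E_j}. -/

import Mathlib

open MeasureTheory Filter Matrix Finset
open scoped ComplexOrder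

noncomputable section

/-- The direction vectors `e_1, …, e_{2d}` in `ℤ^d`, with `e_{d+j} = -e_j`. -/
def dir (d : ℕ) (i : Fin (2 * d)) : Fin d → ℤ :=
  fun j => if (i : ℕ) < d then (if (j : ℕ) = (i : ℕ) then 1 else 0)
           else (if (j : ℕ) = (i : ℕ) - d then -1 else 0)

/-- The direction vectors viewed in `ℝ^d`. -/
def dirR (d : ℕ) (i : Fin (2 * d)) : Fin d → ℝ := fun j => (dir d i j : ℝ)

instance {k : ℕ} : MeasurableSpace (Matrix (Fin k) (Fin k) ℂ) := MeasurableSpace.pi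

/-- A density matrix: positive semidefinite with trace one. -/
def IsDensity {k : ℕ} (ρ : Matrix (Fin k) (Fin k) ℂ) : Prop := ρ.PosSemidef ∧ ρ.trace = 1

/-- The quantum trajectory process of the open quantum random walk. -/
structure IsQTraj {k d : ℕ} {Ω : Type} {mΩ : MeasurableSpace Ω}
    (A : Fin (2 * d) → Matrix (Fin k) (Fin k) ℂ)
    (μ : Measure Ω) (ℱ : Filtration ℕ mΩ)
    (ρ : ℕ → Ω → Matrix (Fin k) (Fin k) ℂ)
    (X : ℕ → Ω → Fin d → ℤ) : Prop where
  density : ∀ n, ∀ᵐ ω ∂μ, IsDensity (ρ n ω)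
  adapted_ρ : ∀ n, Measurable[ℱ n] (ρ n)
  adapted_X : ∀ n, Measurable[ℱ n] (X n)
  prob : ∀ (n : ℕ) (j : Fin (2 * d)),
    μ[(fun ω => if X (n + 1) ω = X n ω + dir d j then (1 : ℝ) else 0) | ℱ n]
      =ᵐ[μ] fun ω => ((A j * ρ n ω * (A j)ᴴ).trace).re
  update : ∀ (n : ℕ) (j : Fin (2 * d)), ∀ᵐ ω ∂μ,
    X (n + 1) ω = X n ω + dir d j →
      ρ (n + 1) ω = ((A j * ρ n ω * (A j)ᴴ).trace)⁻¹ • (A j * ρ n ω * (A j)ᴴ)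

/-- The drift vector `m = Σ_{i=1}^{2d} Tr(A_i ρ_∞ A_i^*) e_i ∈ ℝ^d`. -/
def mvec {k d : ℕ} (A : Fin (2 * d) → Matrix (Fin k) (Fin k) ℂ)
    (ρinf : Matrix (Fin k) (Fin k) ℂ) : Fin d → ℝ :=
  fun j => ∑ i, ((A i * ρinf * (A i)ᴴ).trace).re * dirR d i j

/-- The index `i ∈ {1,…,d}` viewed inside `Fin (2d)` (direction `+e_i`). -/
def lo {d : ℕ} (i : Fin d) : Fin (2 * d) := ⟨i, by have := i.isLt; omega⟩

/-- The index `i + d` viewed inside `Fin (2d)` (direction `-e_i`). -/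
def hi {d : ℕ} (i : Fin d) : Fin (2 * d) := ⟨(i : ℕ) + d, by have := i.isLt; omega⟩

/-- The covariance matrix `C` of the Central Limit Theorem. -/
def Cmat {k d : ℕ} (A : Fin (2 * d) → Matrix (Fin k) (Fin k) ℂ)
    (ρinf : Matrix (Fin k) (Fin k) ℂ) (LL : Fin d → Matrix (Fin k) (Fin k) ℂ)
    (i j : Fin d) : ℝ :=
  (if i = j then ((A (lo i) * ρinf * (A (lo i))ᴴ).trace).re
      + ((A (hi i) * ρinf * (A (hi i))ᴴ).trace).re else 0)
    - mvec A ρinf i * mvec A ρinf j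
    + (((A (lo i) * ρinf * (A (lo i))ᴴ * LL j).trace).re
      + ((A (lo j) * ρinf * (A (lo j))ᴴ * LL i).trace).re
      - ((A (hi i) * ρinf * (A (hi i))ᴴ * LL j).trace).re
      - ((A (hi j) * ρinf * (A (hi j))ᴴ * LL i).trace).re)
    - (mvec A ρinf i * ((ρinf * LL j).trace).re
      + mvec A ρinf j * ((ρinf * LL i).trace).re)

/-! The block projection `P` commutes with every `A i`, and the twisted expectations
`φₙ V = 𝔼[exp (i t Sₙ) Tr(ρₙ V)]` of an additive functional `Sₙ` with increments `w i` satisfy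
`φₙ₊₁ V = φₙ (D_t V)` for `D_t V = ∑ i, exp (i t w i) (A i)ᴴ V (A i)`. With `L` a solution of the
Poisson equation, `P + i t L + t² M` is an eigenvector of `D_t` for `1 - c t² / 2` up to `O(t³)`;
the matrix `M` exists by a Fredholm alternative, because the invariant state of the block is unique.
Hence `𝔼[exp (i tₙ Sₙ) pₙ] → p₀ exp (- c τ / 2)` whenever `n tₙ² → τ`, where `pₙ = Tr(P ρₙ)`.

For `tₙ = 1 / √n` this is the central limit theorem with weight `p_∞`. For `tₙ = θ / n` it is a law
of large numbers for the step frequencies under the weight of each block; as the limiting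
frequencies of two blocks differ, the product of their weights tends to zero, so that `p_∞` is the
indicator of the conditioning event. Lévy's continuity theorem concludes. -/

open scoped Topology

section PositiveSemidefinite

variable {n : Type*}

lemma norm_apply_le_trace_re_of_posSemidef [Fintype n] {M : Matrix n n ℂ} (hM : M.PosSemidef)
    (a b : n) : ‖M a b‖ ≤ M.trace.re := by
  classical
  obtain ⟨B, rfl⟩ : ∃ B : Matrix n n ℂ, M = Bᴴ * B := by
    open scoped MatrixOrder in
    exact CStarAlgebra.nonneg_iff_eq_star_mul_self.mp hM.nonneg
  have trace_eq : (Bᴴ * B).trace.re = ∑ i, ∑ c, ‖B c i‖ ^ 2 := by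
    simp [Matrix.trace, Matrix.mul_apply, ← Complex.normSq_eq_conj_mul_self,
      Complex.normSq_eq_norm_sq, -Complex.ofReal_pow]
  have column_le (a : n) : ∑ c, ‖B c a‖ ^ 2 ≤ (Bᴴ * B).trace.re := by
    rw [trace_eq]
    exact Finset.single_le_sum (f := fun i => ∑ c, ‖B c i‖ ^ 2)
      (fun i _ => by positivity) (Finset.mem_univ a)
  calc ‖(Bᴴ * B) a b‖ ≤ ∑ c, ‖B c a‖ * ‖B c b‖ := by
        simpa [Matrix.mul_apply] using norm_sum_le univ fun c => star (B c a) * B c b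
    _ ≤ ∑ c, (‖B c a‖ ^ 2 + ‖B c b‖ ^ 2) / 2 :=
        Finset.sum_le_sum fun c _ => by nlinarith [sq_nonneg (‖B c a‖ - ‖B c b‖)]
    _ = (∑ c, ‖B c a‖ ^ 2 + ∑ c, ‖B c b‖ ^ 2) / 2 := by
        rw [← Finset.sum_div, Finset.sum_add_distrib]
    _ ≤ (Bᴴ * B).trace.re := by linarith [column_le a, column_le b]

lemma isClosed_setOf_posSemidef [Finite n] : IsClosed {M : Matrix n n ℂ | M.PosSemidef} := by
  cases nonempty_fintype n
  simp only [posSemidef_iff_dotProduct_mulVec, IsHermitian, Set.ofPred_and, Set.ofPred_forall]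
  exact (isClosed_eq (by fun_prop) continuous_id).inter <| isClosed_iInter fun x =>
    isClosed_le continuous_const (by fun_prop)

lemma span_posSemidef [Finite n] :
    Submodule.span ℂ {M : Matrix n n ℂ | M.PosSemidef} = ⊤ := by
  classical
  cases nonempty_fintype n
  open scoped MatrixOrder Matrix.Norms.L2Operator in
  simpa only [nonneg_iff_posSemidef] using CStarAlgebra.span_nonneg (A := Matrix n n ℂ)

lemma ofReal_re_trace_of_posSemidef [Fintype n] {M : Matrix n n ℂ} (hM : M.PosSemidef) :
    ((M.trace.re : ℝ) : ℂ) = M.trace :=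
  Complex.ext rfl (by simp [← (Complex.nonneg_iff.mp hM.trace_nonneg).2])

lemma exists_eq_trace_mul [Fintype n] (f : Matrix n n ℂ →ₗ[ℂ] ℂ) :
    ∃ σ : Matrix n n ℂ, ∀ M, f M = (σ * M).trace := by
  classical
  refine ⟨of fun a b => f (single b a 1), fun M => ?_⟩
  have single_eq (a b : n) : single b a (M b a) = M b a • single b a (1 : ℂ) := by
    simp [smul_single]
  conv_lhs => rw [matrix_eq_sum_single M]
  simp only [map_sum, Matrix.trace, diag_apply, mul_apply, of_apply]
  rw [Finset.sum_comm]
  refine Finset.sum_congr rfl fun a _ => Finset.sum_congr rfl fun b _ => ?_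
  rw [single_eq, map_smul, smul_eq_mul, mul_comm]

end PositiveSemidefinite

section MeanErgodic

lemma birkhoffAverage_id_eq_sum_pow {E : Type*} [AddCommGroup E] [Module ℂ E]
    (T : E →ₗ[ℂ] E) (n : ℕ) (x : E) :
    birkhoffAverage ℂ T id n x = ((n : ℂ)⁻¹ • ∑ m ∈ range n, T ^ m) x := by
  simp [birkhoffAverage, birkhoffSum, LinearMap.sum_apply, Module.End.pow_apply]

variable {E : Type*} [NormedAddCommGroup E] [NormedSpace ℂ E]

lemma birkhoffAverage_id_mem {T : E → E} {S : Set E} (hS : Convex ℝ S) (hT : Set.MapsTo T S S)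
    {x : E} (hx : x ∈ S) {n : ℕ} (hn : n ≠ 0) : birkhoffAverage ℂ T id n x ∈ S := by
  rw [birkhoffAverage_congr_ring ℂ ℝ, birkhoffAverage, birkhoffSum, Finset.smul_sum]
  refine hS.sum_mem (fun _ _ => by positivity) ?_ fun m _ => hT.iterate m hx
  simp [hn]

lemma tendsto_birkhoffAverage_id_of_unique_fixedPt (T : E →L[ℂ] E) {S : Set E}
    (hSc : IsCompact S) (hS : Convex ℝ S) (hT : Set.MapsTo T S S) {r : E}
    (hr : ∀ y ∈ S, T y = y → y = r) {x : E} (hx : x ∈ S) :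
    Tendsto (fun n => birkhoffAverage ℂ T id n x) atTop (𝓝 r) := by
  refine hSc.tendsto_nhds_of_unique_mapClusterPt
    ((eventually_ne_atTop 0).mono fun n hn => birkhoffAverage_id_mem hS hT hx hn)
    fun y hy hcluster => hr y hy ?_
  have orbit_bounded : Bornology.IsBounded (Set.range fun n => id (T^[n] x)) :=
    hSc.isBounded.subset (Set.range_subset_iff.mpr fun n => hT.iterate n hx)
  have map_average (n : ℕ) :
      T (birkhoffAverage ℂ T id n x) = birkhoffAverage ℂ T id n (T x) := by
    rw [map_birkhoffAverage ℂ ℂ T]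
    simp only [birkhoffAverage, birkhoffSum, Function.comp_apply, id_eq,
      ← Function.iterate_succ_apply', Function.iterate_succ_apply]
  have defect_tendsto : Tendsto
      (fun n => T (birkhoffAverage ℂ T id n x) - birkhoffAverage ℂ T id n x) atTop (𝓝 0) := by
    simpa only [map_average] using
      tendsto_birkhoffAverage_apply_sub_birkhoffAverage ℂ orbit_bounded
  have defect_cluster : MapClusterPt (T y - y) atTop
      (fun n => T (birkhoffAverage ℂ T id n x) - birkhoffAverage ℂ T id n x) :=
    hcluster.continuousAt_comp (f := fun z => T z - z) (by fun_prop)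
  exact sub_eq_zero.mp <| eq_of_nhds_neBot <|
    NeBot.mono defect_cluster (inf_le_inf_left _ defect_tendsto)

end MeanErgodic

section KrausMaps

variable {n ι : Type*} [Fintype n] {A : ι → Matrix n n ℂ} {P : Matrix n n ℂ}

/-- The action `V ↦ (A i)ᴴ * V * A i` of a single Kraus operator on observables. -/
def dualBranch (A : ι → Matrix n n ℂ) (i : ι) : Matrix n n ℂ →ₗ[ℂ] Matrix n n ℂ :=
  LinearMap.mulLeftRight ℂ ((A i)ᴴ, A i)

lemma dualBranch_apply (A : ι → Matrix n n ℂ) (i : ι) (V : Matrix n n ℂ) :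
    dualBranch A i V = (A i)ᴴ * V * A i := by
  simp [dualBranch]

lemma trace_mul_dualBranch (i : ι) (σ V : Matrix n n ℂ) :
    (σ * dualBranch A i V).trace = (A i * σ * (A i)ᴴ * V).trace := by
  simp only [dualBranch_apply, ← Matrix.mul_assoc]
  rw [trace_mul_comm]
  simp only [← Matrix.mul_assoc]

lemma commute_conjTranspose_of_isHermitian {B : Matrix n n ℂ} (hP : P.IsHermitian)
    (hPB : Commute P B) : Commute P Bᴴ := by
  simpa only [star_eq_conjTranspose, hP.eq] using hPB.star_star

lemma compress_dualBranch {i : ι} (hP : P.IsHermitian) (hPA : Commute P (A i))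
    (V : Matrix n n ℂ) : P * dualBranch A i V * P = dualBranch A i (P * V * P) := by
  have h₁ := hPA.eq
  have h₂ := (commute_conjTranspose_of_isHermitian hP hPA).eq
  simp only [dualBranch_apply]
  grind

variable [Fintype ι]

/-- The quantum channel `σ ↦ ∑ i, A i * σ * (A i)ᴴ` on states (Schrödinger picture). -/
def krausMap (A : ι → Matrix n n ℂ) : Matrix n n ℂ →ₗ[ℂ] Matrix n n ℂ :=
  ∑ i, LinearMap.mulLeftRight ℂ (A i, (A i)ᴴ)

/-- The trace adjoint `V ↦ ∑ i, (A i)ᴴ * V * A i` of `krausMap A` (Heisenberg picture). -/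
def krausDual (A : ι → Matrix n n ℂ) : Matrix n n ℂ →ₗ[ℂ] Matrix n n ℂ :=
  ∑ i, dualBranch A i

lemma krausMap_apply (A : ι → Matrix n n ℂ) (σ : Matrix n n ℂ) :
    krausMap A σ = ∑ i, A i * σ * (A i)ᴴ := by
  simp [krausMap, LinearMap.sum_apply]

lemma krausDual_apply (A : ι → Matrix n n ℂ) (V : Matrix n n ℂ) :
    krausDual A V = ∑ i, (A i)ᴴ * V * A i := by
  simp [krausDual, dualBranch_apply, LinearMap.sum_apply]

lemma trace_mul_krausDual (σ V : Matrix n n ℂ) :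
    (σ * krausDual A V).trace = (krausMap A σ * V).trace := by
  simp only [krausDual, LinearMap.sum_apply, krausMap_apply, Finset.mul_sum, Finset.sum_mul,
    trace_sum, trace_mul_dualBranch]

lemma krausDual_conjTranspose (V : Matrix n n ℂ) : krausDual A Vᴴ = (krausDual A V)ᴴ := by
  simp [krausDual_apply, conjTranspose_sum, Matrix.mul_assoc]

lemma trace_krausMap [DecidableEq n] (hA : ∑ i, (A i)ᴴ * A i = 1) (σ : Matrix n n ℂ) :
    (krausMap A σ).trace = σ.trace := by
  simpa [krausDual_apply, hA] using (trace_mul_krausDual (A := A) σ 1).symm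

lemma posSemidef_krausMap {σ : Matrix n n ℂ} (hσ : σ.PosSemidef) :
    (krausMap A σ).PosSemidef := by
  rw [krausMap_apply]
  exact posSemidef_sum _ fun i _ => hσ.mul_mul_conjTranspose_same _

lemma compress_krausMap (hP : P.IsHermitian) (hPA : ∀ i, Commute P (A i)) (σ : Matrix n n ℂ) :
    P * krausMap A σ * P = krausMap A (P * σ * P) := by
  simp only [krausMap_apply, Finset.mul_sum, Finset.sum_mul]
  refine Finset.sum_congr rfl fun i _ => ?_
  have h₁ := (hPA i).eq
  have h₂ := (commute_conjTranspose_of_isHermitian hP (hPA i)).eq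
  grind

lemma compress_krausDual (hP : P.IsHermitian) (hPA : ∀ i, Commute P (A i)) (V : Matrix n n ℂ) :
    P * krausDual A V * P = krausDual A (P * V * P) := by
  simp only [krausDual, LinearMap.sum_apply, Finset.mul_sum, Finset.sum_mul,
    compress_dualBranch hP (hPA _)]

end KrausMaps

section ErgodicBlock

variable {k : ℕ}

section Density

attribute [local instance] Matrix.normedAddCommGroup Matrix.normedSpace

lemma IsDensity.norm_le_one {σ : Matrix (Fin k) (Fin k) ℂ} (hσ : IsDensity σ) : ‖σ‖ ≤ 1 :=
  (Matrix.norm_le_iff zero_le_one).mpr fun a b =>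
    (norm_apply_le_trace_re_of_posSemidef hσ.1 a b).trans (by simp [hσ.2])

lemma isCompact_setOf_isDensity : IsCompact {σ : Matrix (Fin k) (Fin k) ℂ | IsDensity σ} := by
  refine Metric.isCompact_of_isClosed_isBounded ?_ ?_
  · exact isClosed_setOf_posSemidef.inter
      (isClosed_eq (by fun_prop : Continuous fun σ : Matrix (Fin k) (Fin k) ℂ => σ.trace)
        continuous_const)
  · exact isBounded_iff_forall_norm_le.mpr ⟨1, fun σ hσ => hσ.norm_le_one⟩

end Density

lemma convex_setOf_isDensity : Convex ℝ {σ : Matrix (Fin k) (Fin k) ℂ | IsDensity σ} := by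
  intro σ hσ τ hτ a b ha hb hab
  refine ⟨(hσ.1.smul ha).add (hτ.1.smul hb), ?_⟩
  simp only [trace_add, trace_smul, hσ.2, hτ.2, ← add_smul, hab, one_smul]

variable {ι : Type*} [Fintype ι]

/-- A diagonal block of the Kraus family `A`: an orthogonal projection `P` commuting with every
`A i`, such that `R` is the only `A`-invariant state supported in the range of `P`. -/
structure IsErgodicBlock (A : ι → Matrix (Fin k) (Fin k) ℂ) (P R : Matrix (Fin k) (Fin k) ℂ) :
    Prop where
  isHermitian : P.IsHermitian
  mul_self : P * P = P
  commute : ∀ i, Commute P (A i)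
  sum_eq_one : ∑ i, (A i)ᴴ * A i = 1
  isDensity : IsDensity R
  supported : P * R * P = R
  invariant : krausMap A R = R
  unique : ∀ σ, IsDensity σ → P * σ * P = σ → krausMap A σ = σ → σ = R

namespace IsErgodicBlock

variable {A : ι → Matrix (Fin k) (Fin k) ℂ} {P R : Matrix (Fin k) (Fin k) ℂ}

section Average

attribute [local instance] Matrix.normedAddCommGroup Matrix.normedSpace

lemma tendsto_birkhoffAverage_of_isDensity (h : IsErgodicBlock A P R)
    {σ : Matrix (Fin k) (Fin k) ℂ} (hσ : IsDensity σ) (hσP : P * σ * P = σ) :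
    Tendsto (fun n => birkhoffAverage ℂ (krausMap A) id n σ) atTop (𝓝 R) := by
  let S : Set (Matrix (Fin k) (Fin k) ℂ) := {σ | IsDensity σ} ∩ {σ | P * σ * P = σ}
  have hS : IsCompact S := isCompact_setOf_isDensity.inter_right
    (isClosed_eq (by fun_prop) continuous_id)
  have hSconv : Convex ℝ S := convex_setOf_isDensity.inter fun σ hσ τ hτ a b _ _ _ => by
    simp only [Set.mem_ofPred_eq] at *
    rw [mul_add, add_mul, Matrix.mul_smul, Matrix.smul_mul, hσ, Matrix.mul_smul,
      Matrix.smul_mul, hτ]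
  have hmaps : Set.MapsTo (krausMap A) S S := fun σ ⟨hσ, hσP⟩ =>
    ⟨⟨posSemidef_krausMap hσ.1, (trace_krausMap h.sum_eq_one σ).trans hσ.2⟩, by
      rw [Set.mem_ofPred_eq, compress_krausMap h.isHermitian h.commute, hσP]⟩
  exact tendsto_birkhoffAverage_id_of_unique_fixedPt (krausMap A).toContinuousLinearMap hS hSconv
    hmaps (fun σ hσ => h.unique σ hσ.1 hσ.2) ⟨hσ, hσP⟩

end Average

lemma tendsto_birkhoffAverage_of_posSemidef (h : IsErgodicBlock A P R)
    {σ : Matrix (Fin k) (Fin k) ℂ} (hσ : σ.PosSemidef) (hσP : P * σ * P = σ) :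
    Tendsto (fun n => birkhoffAverage ℂ (krausMap A) id n σ) atTop (𝓝 (σ.trace • R)) := by
  by_cases h0 : σ.trace = 0
  · obtain rfl := hσ.trace_eq_zero_iff.mp h0
    simp [birkhoffAverage_id_eq_sum_pow]
  · have hnormalized : IsDensity (σ.trace⁻¹ • σ) :=
      ⟨hσ.smul (inv_nonneg.mpr hσ.trace_nonneg), by simp [h0]⟩
    have hlim := (h.tendsto_birkhoffAverage_of_isDensity hnormalized
      (by rw [Matrix.mul_smul, Matrix.smul_mul, hσP])).const_smul σ.trace
    simpa [birkhoffAverage_id_eq_sum_pow, h0] using hlim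

lemma tendsto_birkhoffAverage_compress (h : IsErgodicBlock A P R)
    (σ : Matrix (Fin k) (Fin k) ℂ) :
    Tendsto (fun n => birkhoffAverage ℂ (krausMap A) id n (P * σ * P)) atTop
      (𝓝 ((P * σ * P).trace • R)) := by
  have hσ : σ ∈ Submodule.span ℂ {M : Matrix (Fin k) (Fin k) ℂ | M.PosSemidef} :=
    by simp [span_posSemidef]
  simp only [birkhoffAverage_id_eq_sum_pow]
  induction hσ using Submodule.span_induction with
  | mem σ hσ =>
    have hP := hσ.mul_mul_conjTranspose_same P
    rw [h.isHermitian.eq] at hP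
    simpa only [birkhoffAverage_id_eq_sum_pow] using
      h.tendsto_birkhoffAverage_of_posSemidef hP (by grind [h.mul_self])
  | zero => simp
  | add σ τ _ _ hσ hτ =>
    simpa only [mul_add, add_mul, map_add, trace_add, add_smul] using hσ.add hτ
  | smul c σ _ hσ => simpa [mul_smul] using hσ.const_smul c

lemma eq_trace_smul (h : IsErgodicBlock A P R) {σ : Matrix (Fin k) (Fin k) ℂ}
    (hσ : krausMap A σ = σ) (hσP : P * σ * P = σ) : σ = σ.trace • R := by
  have hlim := h.tendsto_birkhoffAverage_compress σ
  rw [hσP] at hlim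
  exact tendsto_nhds_unique (Function.IsFixedPt.tendsto_birkhoffAverage ℂ hσ id) hlim

/-- Fredholm alternative: a functional vanishing on the range of `1 - krausDual A` is the trace
against a fixed point of `krausMap A`. -/
lemma exists_poisson_solution (h : IsErgodicBlock A P R) {C : Matrix (Fin k) (Fin k) ℂ}
    (hC : P * C * P = C) (hRC : (R * C).trace = 0) :
    ∃ M, M - krausDual A M = C ∧ P * M * P = M := by
  suffices C ∈ LinearMap.range (LinearMap.id - krausDual A) by
    obtain ⟨M, hM⟩ := this
    refine ⟨P * M * P, ?_, by grind [h.mul_self]⟩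
    rw [← compress_krausDual h.isHermitian h.commute, ← Matrix.sub_mul, ← Matrix.mul_sub, ← hC,
      ← hM]
    rfl
  by_contra hnotin
  obtain ⟨f, hfC, hf⟩ := Submodule.exists_le_ker_of_notMem hnotin
  obtain ⟨σ, hσ⟩ := exists_eq_trace_mul f
  have hfix : krausMap A σ = σ := by
    refine Matrix.ext_iff_trace_mul_right.mpr fun M => ?_
    have := hf ⟨M, rfl⟩
    rw [LinearMap.mem_ker, LinearMap.sub_apply, map_sub, hσ, hσ, sub_eq_zero] at this
    rw [← trace_mul_krausDual, ← this, LinearMap.id_apply]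
  have hcompress : P * σ * P = (P * σ * P).trace • R :=
    h.eq_trace_smul (by rw [← compress_krausMap h.isHermitian h.commute, hfix])
      (by grind [h.mul_self])
  refine hfC ?_
  calc f C = (P * σ * P * C).trace := by
        conv_lhs => rw [hσ, ← hC, ← Matrix.mul_assoc, trace_mul_comm]
        simp only [Matrix.mul_assoc]
    _ = 0 := by rw [hcompress, Matrix.smul_mul, trace_smul, hRC, smul_zero]

end IsErgodicBlock

end ErgodicBlock

section TransferOperator

variable {ι E : Type*} [Fintype ι]

section Algebra

variable [AddCommGroup E] [Module ℂ E]

/-- The Fourier-twisted transfer operator `D_t = ∑ i, exp (i t wᵢ) Kᵢ` of a family of branches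
`K i` carrying the weights `w i`. -/
def twistedTransfer (K : ι → E →ₗ[ℂ] E) (w : ι → ℝ) (t : ℝ) : E →ₗ[ℂ] E :=
  ∑ i, Complex.exp (Complex.I * t * w i) • K i

/-- The moment operator `∑ i, wᵢ ^ j Kᵢ`, which is `(-i) ^ j` times the `j`-th derivative at
`t = 0` of `twistedTransfer K w`. -/
def momentTransfer (K : ι → E →ₗ[ℂ] E) (w : ι → ℝ) (j : ℕ) : E →ₗ[ℂ] E :=
  ∑ i, (w i : ℂ) ^ j • K i

/-- The equations, order by order in `t`, for `v₀ + i t v₁ + t² v₂` to be an eigenvector of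
`twistedTransfer K w t` with eigenvalue `1 - c t² / 2` up to an error of order `t³`. -/
structure IsEigenExpansion (K : ι → E →ₗ[ℂ] E) (w : ι → ℝ) (c : ℝ) (v₀ v₁ v₂ : E) : Prop where
  zeroth : momentTransfer K w 0 v₀ = v₀
  first : v₁ - momentTransfer K w 0 v₁ = momentTransfer K w 1 v₀
  second : v₂ - momentTransfer K w 0 v₂ =
    (c / 2 : ℂ) • v₀ - (1 / 2 : ℂ) • momentTransfer K w 2 v₀ - momentTransfer K w 1 v₁

end Algebra

variable [NormedAddCommGroup E] [NormedSpace ℂ E] {K : ι → E →ₗ[ℂ] E} {w : ι → ℝ}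

lemma twistedTransfer_sub_taylor_isBigO (m : ℕ) (v : E) :
    (fun t : ℝ => twistedTransfer K w t v -
      ∑ j ∈ range m, ((Complex.I * t) ^ j / (j.factorial : ℂ)) • momentTransfer K w j v)
      =O[𝓝 0] fun t => t ^ m := by
  have expand (t : ℝ) : twistedTransfer K w t v -
      ∑ j ∈ range m, ((Complex.I * t) ^ j / (j.factorial : ℂ)) • momentTransfer K w j v =
      ∑ i, (Complex.exp (Complex.I * t * w i) -
        ∑ j ∈ range m, (Complex.I * t * w i) ^ j / (j.factorial : ℂ)) • K i v := by
    simp only [twistedTransfer, momentTransfer, LinearMap.sum_apply, LinearMap.smul_apply,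
      sub_smul, Finset.sum_sub_distrib, Finset.smul_sum, Finset.sum_smul, smul_smul]
    rw [Finset.sum_comm]
    simp only [mul_pow, div_mul_eq_mul_div]
  simp only [expand]
  refine Asymptotics.IsBigO.fun_sum fun i _ => ?_
  have hlim : Tendsto (fun t : ℝ => Complex.I * t * w i) (𝓝 0) (𝓝 0) :=
    Continuous.tendsto' (by fun_prop) _ _ (by simp)
  have hlinear : (fun t : ℝ => Complex.I * t * w i) =O[𝓝 0] fun t => t := by
    refine Asymptotics.IsBigO.of_bound |w i| (.of_forall fun t => ?_)
    simp [mul_comm]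
  have hexp := ((Complex.exp_sub_sum_range_isBigO_pow m).comp_tendsto hlim).trans (hlinear.pow m)
  simpa using hexp.smul (Asymptotics.isBigO_const_const (K i v) (one_ne_zero' ℝ) (𝓝 (0 : ℝ)))

lemma IsEigenExpansion.isBigO {c : ℝ} {v₀ v₁ v₂ : E} (h : IsEigenExpansion K w c v₀ v₁ v₂) :
    (fun t : ℝ => twistedTransfer K w t (v₀ + (Complex.I * t) • v₁ + (t ^ 2 : ℂ) • v₂) -
      (1 - c * t ^ 2 / 2 : ℂ) • (v₀ + (Complex.I * t) • v₁ + (t ^ 2 : ℂ) • v₂))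
      =O[𝓝 0] fun t => t ^ 3 := by
  have monomial (j : ℕ) (a : ℂ) : (fun t : ℝ => a * (t : ℂ) ^ j) =O[𝓝 0] fun t => t ^ j :=
    Asymptotics.IsBigO.of_bound ‖a‖ (.of_forall fun t => by simp)
  have taylor₀ := twistedTransfer_sub_taylor_isBigO (K := K) (w := w) 3 v₀
  have taylor₁ := (monomial 1 Complex.I).smul
    (twistedTransfer_sub_taylor_isBigO (K := K) (w := w) 2 v₁)
  have taylor₂ := (monomial 2 1).smul (twistedTransfer_sub_taylor_isBigO (K := K) (w := w) 1 v₂)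
  have tail : (fun t : ℝ => (1 * (t : ℂ) ^ 3) • ((c / 2 * Complex.I) • v₁ + (c / 2 * t : ℂ) • v₂))
      =O[𝓝 0] fun t => t ^ 3 := by
    have hcont : Continuous fun t : ℝ => (c / 2 * Complex.I) • v₁ + (c / 2 * t : ℂ) • v₂ := by
      fun_prop
    simpa using (monomial 3 1).smul ((hcont.tendsto 0).isBigO_one ℝ)
  simp only [smul_eq_mul, ← pow_add] at taylor₁ taylor₂
  refine (((taylor₀.add taylor₁).add taylor₂).add tail).congr_left fun t => ?_
  simp only [Finset.sum_range_succ, range_zero, sum_empty, Nat.factorial, map_add, map_smul]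
  linear_combination (norm := module) -h.zeroth + (Complex.I * t) • h.first + (t ^ 2 : ℂ) • h.second
    - (t ^ 2 / 2 : ℂ) • (Complex.I_sq • momentTransfer K w 2 v₀)
    - (t ^ 2 : ℂ) • (Complex.I_sq • momentTransfer K w 1 v₁)

lemma norm_sub_pow_mul_le {x : ℕ → ℂ} {a : ℂ} {q ε : ℝ} (haq : ‖a‖ ≤ q) (hq : 1 ≤ q)
    (hx : ∀ m, ‖x (m + 1) - a * x m‖ ≤ ε) (m : ℕ) : ‖x m - a ^ m * x 0‖ ≤ m * ε * q ^ m := by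
  have hε : 0 ≤ ε := (norm_nonneg _).trans (hx 0)
  induction m with
  | zero => simp
  | succ m ih =>
    calc ‖x (m + 1) - a ^ (m + 1) * x 0‖
        = ‖(x (m + 1) - a * x m) + a * (x m - a ^ m * x 0)‖ := by ring_nf
      _ ≤ ‖x (m + 1) - a * x m‖ + ‖a‖ * ‖x m - a ^ m * x 0‖ :=
          (norm_add_le _ _).trans_eq (by rw [norm_mul])
      _ ≤ ε * q ^ (m + 1) + q * (m * ε * q ^ m) := by
          gcongr
          exact (hx m).trans (le_mul_of_one_le_right hε (one_le_pow₀ hq))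
      _ = (m + 1 : ℕ) * ε * q ^ (m + 1) := by push_cast; ring

lemma tendsto_zero_of_tendsto_natCast_mul_sq {t : ℕ → ℝ} {τ : ℝ}
    (ht : Tendsto (fun n : ℕ => n * t n ^ 2) atTop (𝓝 τ)) : Tendsto t atTop (𝓝 0) := by
  have hsq : Tendsto (fun n => t n ^ 2) atTop (𝓝 0) := by
    have hprod := ht.mul tendsto_inv_atTop_nhds_zero_nat
    rw [mul_zero] at hprod
    refine hprod.congr' ((eventually_ne_atTop 0).mono fun n hn => ?_)
    field_simp
  rw [tendsto_zero_iff_abs_tendsto_zero]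
  simpa [Function.comp_def, Real.sqrt_sq_eq_abs] using hsq.sqrt

/-- Iterating `n` times at a frequency with `n t² → τ`, the eigenvalue `1 - c t² / 2` yields
`exp (-c τ / 2)`, while the errors add up to `n O(t³) → 0`. -/
lemma IsEigenExpansion.tendsto_iterate {c : ℝ} {v₀ v₁ v₂ : E}
    (h : IsEigenExpansion K w c v₀ v₁ v₂) {φ : ℕ → ℕ → E →ₗ[ℂ] ℂ} {ψ : E →ₗ[ℂ] ℂ} {B : ℝ}
    (hφ : ∀ n m v, ‖φ n m v‖ ≤ B * ‖v‖) (hφ_zero : ∀ n, φ n 0 = ψ) {t : ℕ → ℝ} {τ : ℝ}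
    (ht : Tendsto (fun n : ℕ => n * t n ^ 2) atTop (𝓝 τ))
    (hφ_succ : ∀ n m v, φ n (m + 1) v = φ n m (twistedTransfer K w (t n) v)) :
    Tendsto (fun n => φ n n v₀) atTop (𝓝 (Complex.exp (-(c * τ / 2)) * ψ v₀)) := by
  have ht₀ := tendsto_zero_of_tendsto_natCast_mul_sq ht
  let u (t : ℝ) : E := v₀ + (Complex.I * t) • v₁ + (t ^ 2 : ℂ) • v₂
  let a (t : ℝ) : ℂ := 1 - c * t ^ 2 / 2
  have hu : Tendsto (fun n => u (t n)) atTop (𝓝 v₀) :=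
    (Continuous.tendsto' (by fun_prop : Continuous u) 0 v₀ (by simp [u])).comp ht₀
  have pow_a : Tendsto (fun n => a (t n) ^ n) atTop (𝓝 (Complex.exp (-(c * τ / 2)))) := by
    simp only [a, sub_eq_add_neg]
    refine Complex.tendsto_one_add_pow_exp_of_tendsto ?_
    convert ((Complex.continuous_ofReal.tendsto _).comp (ht.const_mul (-(c / 2)))) using 2 <;>
      simp <;> ring
  have pow_q : Tendsto (fun n => (1 + |c| * t n ^ 2 / 2) ^ n) atTop
      (𝓝 (Real.exp (|c| / 2 * τ))) :=
    Real.tendsto_one_add_pow_exp_of_tendsto ((ht.const_mul _).congr fun n => by ring)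
  have norm_a (n : ℕ) : ‖a (t n)‖ ≤ 1 + |c| * t n ^ 2 / 2 :=
    (norm_sub_le _ _).trans_eq (by simp)
  have defect : Tendsto (fun n : ℕ => n * (B *
      ‖twistedTransfer K w (t n) (u (t n)) - a (t n) • u (t n)‖)) atTop (𝓝 0) := by
    have hsmall : Tendsto (fun n => n * t n ^ 3) atTop (𝓝 0) := by
      simpa [pow_succ, mul_assoc] using ht.mul ht₀
    exact ((Asymptotics.isBigO_refl (fun n : ℕ => (n : ℝ)) atTop).mul
      ((h.isBigO.comp_tendsto ht₀).norm_left.const_mul_left B)).trans_tendsto hsmall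
  have error : Tendsto (fun n => φ n n (u (t n)) - a (t n) ^ n * ψ (u (t n))) atTop (𝓝 0) := by
    refine squeeze_zero_norm (fun n => ?_) (by simpa using defect.mul pow_q)
    rw [← hφ_zero n]
    refine norm_sub_pow_mul_le (x := fun m => φ n m (u (t n))) (norm_a n)
      (le_add_of_nonneg_right (by positivity)) (fun m => ?_) n
    rw [hφ_succ, ← smul_eq_mul, ← map_smul, ← map_sub]
    exact hφ _ _ _
  have perturb {χ : ℕ → E →ₗ[ℂ] ℂ} (hχ : ∀ n v, ‖χ n v‖ ≤ B * ‖v‖) :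
      Tendsto (fun n => χ n (v₀ - u (t n))) atTop (𝓝 0) :=
    squeeze_zero_norm (fun n => hχ _ _) (by simpa using (hu.const_sub v₀).norm.const_mul B)
  have hψ : Tendsto (fun n => ψ (u (t n))) atTop (𝓝 (ψ v₀)) := by
    have hψ_sub := perturb (χ := fun _ => ψ) fun _ => hφ_zero 0 ▸ hφ 0 0
    simpa using hψ_sub.const_sub (ψ v₀)
  simpa using ((perturb fun n => hφ n n).add error).add (pow_a.mul hψ)

end TransferOperator

section TraceFunctional

lemma measurable_trace_mul {k : ℕ} (V : Matrix (Fin k) (Fin k) ℂ) :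
    Measurable fun T : Matrix (Fin k) (Fin k) ℂ => (T * V).trace := by
  simp only [Matrix.trace, Matrix.diag, Matrix.mul_apply]
  refine Finset.measurable_sum _ fun a _ => Finset.measurable_sum _ fun b _ => ?_
  exact ((measurable_pi_apply b).comp (measurable_pi_apply a)).mul_const _

attribute [local instance] Matrix.normedAddCommGroup

variable {n : Type*} [Fintype n] {T : Matrix n n ℂ}

lemma norm_trace_mul_le_of_posSemidef (hT : T.PosSemidef) (V : Matrix n n ℂ) :
    ‖(T * V).trace‖ ≤ T.trace.re * (Fintype.card n ^ 2 * ‖V‖) := by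
  calc ‖(T * V).trace‖ ≤ ∑ a, ∑ b, ‖T a b * V b a‖ := by
        simp only [Matrix.trace, Matrix.diag, Matrix.mul_apply]
        exact (norm_sum_le _ _).trans (Finset.sum_le_sum fun a _ => norm_sum_le _ _)
    _ ≤ ∑ _a : n, ∑ _b : n, T.trace.re * ‖V‖ := by
        refine Finset.sum_le_sum fun a _ => Finset.sum_le_sum fun b _ => ?_
        rw [norm_mul]
        exact mul_le_mul (norm_apply_le_trace_re_of_posSemidef hT a b)
          (Matrix.norm_entry_le_entrywise_sup_norm V) (norm_nonneg _)
          (Complex.nonneg_iff.mp hT.trace_nonneg).1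
    _ = T.trace.re * (Fintype.card n ^ 2 * ‖V‖) := by
        simp only [Finset.sum_const, Finset.card_univ, nsmul_eq_mul]
        ring

lemma norm_trace_inv_trace_smul_mul_le (hT : T.PosSemidef) (V : Matrix n n ℂ) :
    ‖((T.trace⁻¹ • T) * V).trace‖ ≤ Fintype.card n ^ 2 * ‖V‖ := by
  have trace_nonneg := (Complex.nonneg_iff.mp hT.trace_nonneg).1
  rw [Matrix.smul_mul, trace_smul, norm_smul, norm_inv, ← ofReal_re_trace_of_posSemidef hT,
    Complex.norm_real, Real.norm_of_nonneg trace_nonneg]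
  exact inv_mul_le_of_le_mul₀ trace_nonneg (by positivity) (norm_trace_mul_le_of_posSemidef hT V)

lemma trace_mul_trace_inv_trace_smul_mul (hT : T.PosSemidef) (V : Matrix n n ℂ) :
    T.trace * ((T.trace⁻¹ • T) * V).trace = (T * V).trace := by
  rw [Matrix.smul_mul, trace_smul, smul_eq_mul]
  by_cases h : T.trace = 0
  · simp [hT.trace_eq_zero_iff.mp h]
  · rw [mul_inv_cancel_left₀ h]

lemma IsDensity.norm_trace_mul_le {k : ℕ} {T : Matrix (Fin k) (Fin k) ℂ} (hT : IsDensity T)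
    (V : Matrix (Fin k) (Fin k) ℂ) : ‖(T * V).trace‖ ≤ k ^ 2 * ‖V‖ := by
  simpa [hT.2] using norm_trace_mul_le_of_posSemidef hT.1 V

end TraceFunctional

section Trajectory

lemma dir_injective (d : ℕ) : Function.Injective (dir d) := by
  intro i i' h
  apply Fin.ext
  by_cases hi : (i : ℕ) < d
  · have := congrFun h ⟨i, hi⟩
    simp only [dir, hi, if_true] at this
    grind
  · have := congrFun h ⟨(i : ℕ) - d, by omega⟩
    simp only [dir, hi, if_false, if_true] at this
    grind

variable {d : ℕ} {Ω : Type}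

/-- The indicator of the event that the walk makes the step `dir d i` at time `n`. -/
def stepIndicator (X : ℕ → Ω → Fin d → ℤ) (n : ℕ) (i : Fin (2 * d)) (ω : Ω) : ℝ :=
  if X (n + 1) ω = X n ω + dir d i then 1 else 0

/-- The additive functional of the walk `X` which gains `w i` at each step in direction `i`. -/
def stepSum (X : ℕ → Ω → Fin d → ℤ) (w : Fin (2 * d) → ℝ) (n : ℕ) (ω : Ω) : ℝ :=
  ∑ m ∈ range n, ∑ i, w i * stepIndicator X m i ω

variable {X : ℕ → Ω → Fin d → ℤ}

lemma norm_stepIndicator_le_one (n : ℕ) (i : Fin (2 * d)) (ω : Ω) :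
    ‖stepIndicator X n i ω‖ ≤ 1 := by
  unfold stepIndicator
  split_ifs <;> simp

lemma stepIndicator_of_step {n : ℕ} {i : Fin (2 * d)} {ω : Ω}
    (h : X (n + 1) ω = X n ω + dir d i) (i' : Fin (2 * d)) :
    stepIndicator X n i' ω = if i' = i then 1 else 0 := by
  simp only [stepIndicator, h, add_right_inj, (dir_injective d).eq_iff, eq_comm]

lemma stepSum_succ_of_step {n : ℕ} {i : Fin (2 * d)} {ω : Ω}
    (h : X (n + 1) ω = X n ω + dir d i) (w : Fin (2 * d) → ℝ) :
    stepSum X w (n + 1) ω = stepSum X w n ω + w i := by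
  simp [stepSum, Finset.sum_range_succ, stepIndicator_of_step h]

lemma norm_exp_I_mul_ofReal_mul_ofReal (t x : ℝ) :
    ‖Complex.exp (Complex.I * t * x)‖ = 1 := by
  simpa [mul_assoc] using Complex.norm_exp_I_mul_ofReal (t * x)

namespace IsQTraj

variable {k : ℕ} {mΩ : MeasurableSpace Ω} {A : Fin (2 * d) → Matrix (Fin k) (Fin k) ℂ}
    {μ : Measure Ω} {ℱ : Filtration ℕ mΩ} {ρ : ℕ → Ω → Matrix (Fin k) (Fin k) ℂ}

lemma measurable_stepIndicator (h : IsQTraj A μ ℱ ρ X) (n : ℕ) (i : Fin (2 * d)) :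
    Measurable[ℱ (n + 1)] (stepIndicator X n i) := by
  have hX : Measurable[ℱ (n + 1)] (X n) := (h.adapted_X n).mono (ℱ.mono n.le_succ) le_rfl
  exact Measurable.ite (measurableSet_eq_fun (h.adapted_X (n + 1)) (hX.add_const _))
    measurable_const measurable_const

lemma measurable_stepSum (h : IsQTraj A μ ℱ ρ X) (w : Fin (2 * d) → ℝ) (n : ℕ) :
    Measurable[ℱ n] (stepSum X w n) :=
  Finset.measurable_sum _ fun m hm => Finset.measurable_sum _ fun i _ =>
    ((h.measurable_stepIndicator m i).mono (ℱ.mono (Finset.mem_range.mp hm)) le_rfl).const_mul _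

lemma measurable_exp_stepSum (h : IsQTraj A μ ℱ ρ X) (w : Fin (2 * d) → ℝ) (t : ℝ) (n : ℕ) :
    Measurable[ℱ n] fun ω => Complex.exp (Complex.I * t * stepSum X w n ω) :=
  (by fun_prop : Measurable fun x : ℝ => Complex.exp (Complex.I * t * x)).comp
    (h.measurable_stepSum w n)

lemma measurable_trace_mul (h : IsQTraj A μ ℱ ρ X) (n : ℕ) (V : Matrix (Fin k) (Fin k) ℂ) :
    Measurable[ℱ n] fun ω => (ρ n ω * V).trace :=
  (_root_.measurable_trace_mul V).comp (h.adapted_ρ n)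

variable [IsProbabilityMeasure μ]

lemma integrable_stepIndicator (h : IsQTraj A μ ℱ ρ X) (n : ℕ) (i : Fin (2 * d)) :
    Integrable (stepIndicator X n i) μ :=
  .of_bound ((h.measurable_stepIndicator n i).mono (ℱ.le _) le_rfl).aestronglyMeasurable 1
    (.of_forall fun ω => norm_stepIndicator_le_one n i ω)

lemma integral_stepIndicator_smul (h : IsQTraj A μ ℱ ρ X) {n : ℕ} (i : Fin (2 * d)) {G : Ω → ℂ}
    (hG : Measurable[ℱ n] G) {C : ℝ} (hGC : ∀ᵐ ω ∂μ, ‖G ω‖ ≤ C) :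
    ∫ ω, stepIndicator X n i ω • G ω ∂μ =
      ∫ ω, (A i * ρ n ω * (A i)ᴴ).trace.re • G ω ∂μ := by
  have hintegrable : Integrable (stepIndicator X n i • G) μ :=
    (h.integrable_stepIndicator n i).smul_bdd C
      (hG.mono (ℱ.le n) le_rfl).aestronglyMeasurable hGC
  calc ∫ ω, (stepIndicator X n i • G) ω ∂μ
      = ∫ ω, (μ[stepIndicator X n i • G | ℱ n]) ω ∂μ := (integral_condExp (ℱ.le n)).symm
    _ = ∫ ω, (A i * ρ n ω * (A i)ᴴ).trace.re • G ω ∂μ := by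
        refine integral_congr_ae ?_
        filter_upwards [condExp_smul_of_aestronglyMeasurable_right
          (h.integrable_stepIndicator n i) hintegrable hG.stronglyMeasurable.aestronglyMeasurable,
          h.prob n i] with ω hpull hprob
        rw [hpull]
        exact congrArg (· • G ω) hprob

/-- The normalisation of the updated state cancels the probability of the step. -/
lemma integral_stepIndicator_smul_mul_trace (h : IsQTraj A μ ℱ ρ X) {n : ℕ} (i : Fin (2 * d))
    {g : Ω → ℂ} (hg : Measurable[ℱ n] g) {C : ℝ} (hgC : ∀ ω, ‖g ω‖ ≤ C)
    (V : Matrix (Fin k) (Fin k) ℂ) :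
    ∫ ω, stepIndicator X n i ω • (g ω * (ρ (n + 1) ω * V).trace) ∂μ =
      ∫ ω, g ω * (ρ n ω * dualBranch A i V).trace ∂μ := by
  let _ := Matrix.normedAddCommGroup (m := Fin k) (n := Fin k) (α := ℂ)
  let T ω := A i * ρ n ω * (A i)ᴴ
  have hT : ∀ᵐ ω ∂μ, (T ω).PosSemidef := by
    filter_upwards [h.density n] with ω hω using hω.1.mul_mul_conjTranspose_same _
  have measurable_T (V) : Measurable[ℱ n] fun ω => (T ω * V).trace := by
    simpa only [T, trace_mul_dualBranch] using h.measurable_trace_mul n (dualBranch A i V)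
  let G ω := g ω * (((T ω).trace⁻¹ • T ω) * V).trace
  have measurable_G : Measurable[ℱ n] G := by
    simp only [G, Matrix.smul_mul, trace_smul, smul_eq_mul]
    exact hg.mul ((by simpa using measurable_T 1 : Measurable[ℱ n] _).inv.mul (measurable_T V))
  have norm_G_le : ∀ᵐ ω ∂μ, ‖G ω‖ ≤ C * (Fintype.card (Fin k) ^ 2 * ‖V‖) := by
    filter_upwards [hT] with ω hω
    rw [norm_mul]
    exact mul_le_mul (hgC ω) (norm_trace_inv_trace_smul_mul_le hω V) (norm_nonneg _)
      ((norm_nonneg _).trans (hgC ω))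
  calc ∫ ω, stepIndicator X n i ω • (g ω * (ρ (n + 1) ω * V).trace) ∂μ
      = ∫ ω, stepIndicator X n i ω • G ω ∂μ := by
        refine integral_congr_ae ?_
        filter_upwards [h.update n i] with ω hω
        by_cases hstep : X (n + 1) ω = X n ω + dir d i
        · simp only [hω hstep, G, T]
        · simp [stepIndicator, hstep]
    _ = ∫ ω, (T ω).trace.re • G ω ∂μ := h.integral_stepIndicator_smul i measurable_G norm_G_le
    _ = ∫ ω, g ω * (ρ n ω * dualBranch A i V).trace ∂μ := by
        refine integral_congr_ae ?_
        filter_upwards [hT] with ω hω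
        rw [Complex.real_smul, ofReal_re_trace_of_posSemidef hω, mul_left_comm,
          trace_mul_trace_inv_trace_smul_mul hω, trace_mul_dualBranch]

lemma ae_exists_step (h : IsQTraj A μ ℱ ρ X) (hA : ∑ i, (A i)ᴴ * A i = 1) :
    ∀ᵐ ω ∂μ, ∀ n, ∃ i, X (n + 1) ω = X n ω + dir d i := by
  refine ae_all_iff.mpr fun n => ?_
  have sum_prob : ∀ᵐ ω ∂μ, ∑ i, (A i * ρ n ω * (A i)ᴴ).trace.re = 1 := by
    filter_upwards [h.density n] with ω hω
    rw [← Complex.re_sum, ← trace_sum, ← krausMap_apply, trace_krausMap hA, hω.2, Complex.one_re]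
  have integrable_sum : Integrable (fun ω => ∑ i, stepIndicator X n i ω) μ :=
    integrable_finsetSum _ fun i _ => h.integrable_stepIndicator n i
  have integral_sum : ∫ ω, ∑ i, stepIndicator X n i ω ∂μ = 1 := by
    calc ∫ ω, ∑ i, stepIndicator X n i ω ∂μ
        = ∑ i, ∫ ω, (A i * ρ n ω * (A i)ᴴ).trace.re ∂μ := by
          rw [integral_finsetSum _ fun i _ => h.integrable_stepIndicator n i]
          refine Finset.sum_congr rfl fun i _ => ?_
          rw [← integral_condExp (ℱ.le n)]
          exact integral_congr_ae (h.prob n i)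
      _ = ∫ ω, ∑ i, (A i * ρ n ω * (A i)ᴴ).trace.re ∂μ :=
          (integral_finsetSum _ fun i _ => integrable_condExp.congr (h.prob n i)).symm
      _ = 1 := by simp [integral_congr_ae sum_prob]
  have sum_le_one (ω : Ω) : ∑ i, stepIndicator X n i ω ≤ 1 := by
    by_cases hstep : ∃ i, X (n + 1) ω = X n ω + dir d i
    · obtain ⟨i, hi⟩ := hstep
      simp [stepIndicator_of_step hi]
    · simp [stepIndicator, not_exists.mp hstep]
  have sum_eq_one : (fun ω => ∑ i, stepIndicator X n i ω) =ᵐ[μ] fun _ => 1 :=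
    (integral_eq_iff_of_ae_le integrable_sum (integrable_const 1) (.of_forall sum_le_one)).mp
      (by simp [integral_sum])
  filter_upwards [sum_eq_one] with ω hω
  by_contra hstep
  simp [stepIndicator, not_exists.mp hstep] at hω

lemma integrable_exp_mul_trace (h : IsQTraj A μ ℱ ρ X) (w : Fin (2 * d) → ℝ) (t : ℝ) (n : ℕ)
    (V : Matrix (Fin k) (Fin k) ℂ) :
    Integrable (fun ω => Complex.exp (Complex.I * t * stepSum X w n ω) * (ρ n ω * V).trace) μ := by
  let _ := Matrix.normedAddCommGroup (m := Fin k) (n := Fin k) (α := ℂ)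
  refine .of_bound (((h.measurable_exp_stepSum w t n).mul (h.measurable_trace_mul n V)).mono
    (ℱ.le n) le_rfl).aestronglyMeasurable (k ^ 2 * ‖V‖) ?_
  filter_upwards [h.density n] with ω hω
  rw [norm_mul, norm_exp_I_mul_ofReal_mul_ofReal, one_mul]
  exact hω.norm_trace_mul_le V

/-- The twisted expectation `V ↦ 𝔼[exp (i t Sₙ) Tr (ρₙ V)]`, where `Sₙ = stepSum X w n`. -/
def twistedExpectation (h : IsQTraj A μ ℱ ρ X) (w : Fin (2 * d) → ℝ) (t : ℝ) (n : ℕ) :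
    Matrix (Fin k) (Fin k) ℂ →ₗ[ℂ] ℂ where
  toFun V := ∫ ω, Complex.exp (Complex.I * t * stepSum X w n ω) * (ρ n ω * V).trace ∂μ
  map_add' U V := by
    simp only [trace_add, mul_add]
    exact integral_add (h.integrable_exp_mul_trace w t n U) (h.integrable_exp_mul_trace w t n V)
  map_smul' c V := by
    simp only [Matrix.mul_smul, trace_smul, smul_eq_mul, mul_left_comm _ c, integral_const_mul,
      RingHom.id_apply]

lemma twistedExpectation_apply (h : IsQTraj A μ ℱ ρ X) (w : Fin (2 * d) → ℝ) (t : ℝ) (n : ℕ)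
    (V : Matrix (Fin k) (Fin k) ℂ) : h.twistedExpectation w t n V =
      ∫ ω, Complex.exp (Complex.I * t * stepSum X w n ω) * (ρ n ω * V).trace ∂μ := rfl

lemma twistedExpectation_zero (h : IsQTraj A μ ℱ ρ X) {ρ₀ : Matrix (Fin k) (Fin k) ℂ}
    (hρ₀ : ∀ ω, ρ 0 ω = ρ₀) (w : Fin (2 * d) → ℝ) (t : ℝ) (V : Matrix (Fin k) (Fin k) ℂ) :
    h.twistedExpectation w t 0 V = (ρ₀ * V).trace := by
  simp [twistedExpectation_apply, stepSum, hρ₀]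

lemma twistedExpectation_succ (h : IsQTraj A μ ℱ ρ X) (hA : ∑ i, (A i)ᴴ * A i = 1)
    (w : Fin (2 * d) → ℝ) (t : ℝ) (n : ℕ) (V : Matrix (Fin k) (Fin k) ℂ) :
    h.twistedExpectation w t (n + 1) V =
      h.twistedExpectation w t n (twistedTransfer (dualBranch A) w t V) := by
  let g ω := Complex.exp (Complex.I * t * stepSum X w n ω)
  have norm_g (ω : Ω) : ‖g ω‖ ≤ 1 := (norm_exp_I_mul_ofReal_mul_ofReal _ _).le
  have integrable_branch (i) :
      Integrable (fun ω => stepIndicator X n i ω • (g ω * (ρ (n + 1) ω * V).trace)) μ := by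
    have htrace : Integrable (fun ω => (ρ (n + 1) ω * V).trace) μ := by
      simpa using h.integrable_exp_mul_trace 0 0 (n + 1) V
    have hg : AEStronglyMeasurable g μ :=
      ((h.measurable_exp_stepSum w t n).mono (ℱ.le n) le_rfl).aestronglyMeasurable
    exact (htrace.bdd_mul hg (.of_forall norm_g)).bdd_smul 1
      (h.integrable_stepIndicator n i).aestronglyMeasurable
      (.of_forall (norm_stepIndicator_le_one n i))
  calc h.twistedExpectation w t (n + 1) V
      = ∫ ω, ∑ i, Complex.exp (Complex.I * t * w i) *
          (stepIndicator X n i ω • (g ω * (ρ (n + 1) ω * V).trace)) ∂μ := by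
        refine integral_congr_ae ?_
        filter_upwards [h.ae_exists_step hA] with ω hω
        obtain ⟨i, hi⟩ := hω n
        simp only [stepSum_succ_of_step hi, Complex.ofReal_add, mul_add, Complex.exp_add,
          stepIndicator_of_step hi, ite_smul, one_smul, zero_smul, mul_ite, mul_zero,
          sum_ite_eq', mem_univ, ↓reduceIte, g]
        ring
    _ = ∑ i, Complex.exp (Complex.I * t * w i) * h.twistedExpectation w t n (dualBranch A i V) := by
        rw [integral_finsetSum _ fun i _ => (integrable_branch i).const_mul _]
        refine Finset.sum_congr rfl fun i _ => ?_
        rw [integral_const_mul, h.integral_stepIndicator_smul_mul_trace i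
          (h.measurable_exp_stepSum w t n) norm_g, twistedExpectation_apply]
    _ = h.twistedExpectation w t n (twistedTransfer (dualBranch A) w t V) := by
        simp [twistedTransfer, LinearMap.sum_apply]

lemma integral_trace_mul_of_krausDual_eq (h : IsQTraj A μ ℱ ρ X) (hA : ∑ i, (A i)ᴴ * A i = 1)
    {ρ₀ V : Matrix (Fin k) (Fin k) ℂ} (hρ₀ : ∀ ω, ρ 0 ω = ρ₀) (hV : krausDual A V = V) (n : ℕ) :
    ∫ ω, (ρ n ω * V).trace ∂μ = (ρ₀ * V).trace := by
  have untwisted : twistedTransfer (dualBranch A) 0 0 V = V := by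
    simpa [twistedTransfer, krausDual] using hV
  suffices h.twistedExpectation 0 0 n V = (ρ₀ * V).trace by
    simpa [twistedExpectation_apply] using this
  induction n with
  | zero => exact h.twistedExpectation_zero hρ₀ 0 0 V
  | succ n ih => rw [h.twistedExpectation_succ hA, untwisted, ih]

section Bound

attribute [local instance] Matrix.normedAddCommGroup

lemma norm_twistedExpectation_le (h : IsQTraj A μ ℱ ρ X) (w : Fin (2 * d) → ℝ) (t : ℝ) (n : ℕ)
    (V : Matrix (Fin k) (Fin k) ℂ) : ‖h.twistedExpectation w t n V‖ ≤ k ^ 2 * ‖V‖ := by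
  rw [twistedExpectation_apply]
  refine (norm_integral_le_of_norm_le_const (C := k ^ 2 * ‖V‖) ?_).trans_eq (by simp)
  filter_upwards [h.density n] with ω hω
  rw [norm_mul, norm_exp_I_mul_ofReal_mul_ofReal, one_mul]
  exact hω.norm_trace_mul_le V

end Bound

end IsQTraj

end Trajectory

section PoissonEquation

lemma trace_mul_realPart_of_isHermitian {n : Type*} [Fintype n] {T : Matrix n n ℂ}
    (hT : T.IsHermitian) (L : Matrix n n ℂ) :
    (T * (realPart L : Matrix n n ℂ)).trace = (T * L).trace.re := by
  have conj_trace : (T * Lᴴ).trace = star (T * L).trace := by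
    rw [← trace_conjTranspose, conjTranspose_mul, hT.eq, trace_mul_comm]
  rw [realPart_apply_coe, Matrix.mul_smul, Matrix.mul_add, trace_smul, trace_add,
    star_eq_conjTranspose, conj_trace, Complex.star_def, Complex.add_conj, Complex.real_smul]
  push_cast
  ring

variable {k : ℕ} {ι : Type*} [Fintype ι] {A : ι → Matrix (Fin k) (Fin k) ℂ}
  {P R : Matrix (Fin k) (Fin k) ℂ} {w : ι → ℝ}

/-- The variance per unit of time, in the stationary state `R`, of the additive functional with
weights `w`, where `L` solves the associated Poisson equation. -/
def asymptoticVariance (A : ι → Matrix (Fin k) (Fin k) ℂ) (R : Matrix (Fin k) (Fin k) ℂ)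
    (w : ι → ℝ) (L : Matrix (Fin k) (Fin k) ℂ) : ℝ :=
  ∑ i, (w i ^ 2 * (A i * R * (A i)ᴴ).trace.re + 2 * w i * (A i * R * (A i)ᴴ * L).trace.re)

lemma momentTransfer_dualBranch_zero : momentTransfer (dualBranch A) w 0 = krausDual A := by
  simp [momentTransfer, krausDual]

lemma trace_mul_momentTransfer_dualBranch (σ V : Matrix (Fin k) (Fin k) ℂ) (j : ℕ) :
    (σ * momentTransfer (dualBranch A) w j V).trace =
      ∑ i, (w i : ℂ) ^ j * (A i * σ * (A i)ᴴ * V).trace := by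
  simp only [momentTransfer, LinearMap.sum_apply, LinearMap.smul_apply, Finset.mul_sum,
    Matrix.mul_smul, trace_sum, trace_smul, trace_mul_dualBranch, smul_eq_mul]

lemma conjTranspose_momentTransfer_dualBranch (V : Matrix (Fin k) (Fin k) ℂ) (j : ℕ) :
    (momentTransfer (dualBranch A) w j V)ᴴ = momentTransfer (dualBranch A) w j Vᴴ := by
  simp [momentTransfer, LinearMap.sum_apply, dualBranch_apply, conjTranspose_sum,
    Matrix.mul_assoc, ← Complex.ofReal_pow]

namespace IsErgodicBlock

lemma krausDual_proj (h : IsErgodicBlock A P R) : krausDual A P = P := by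
  calc krausDual A P = krausDual A (P * 1 * P) := by rw [mul_one, h.mul_self]
    _ = P * krausDual A 1 * P := (compress_krausDual h.isHermitian h.commute 1).symm
    _ = P := by simp [krausDual_apply, h.sum_eq_one, h.mul_self]

lemma compress_momentTransfer (h : IsErgodicBlock A P R) {V : Matrix (Fin k) (Fin k) ℂ}
    (hV : P * V * P = V) (j : ℕ) :
    P * momentTransfer (dualBranch A) w j V * P = momentTransfer (dualBranch A) w j V := by
  simp only [momentTransfer, LinearMap.sum_apply, LinearMap.smul_apply, Finset.mul_sum,
    Finset.sum_mul, Matrix.mul_smul, Matrix.smul_mul,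
    compress_dualBranch h.isHermitian (h.commute _), hV]

lemma state_mul_proj (h : IsErgodicBlock A P R) : R * P = R := by
  calc R * P = P * R * (P * P) := by rw [← Matrix.mul_assoc, h.supported]
    _ = R := by rw [h.mul_self, h.supported]

lemma mul_branch_proj (h : IsErgodicBlock A P R) (i : ι) :
    A i * R * (A i)ᴴ * P = A i * R * (A i)ᴴ := by
  have hcomm := commute_conjTranspose_of_isHermitian h.isHermitian (h.commute i)
  rw [Matrix.mul_assoc, ← hcomm.eq, ← Matrix.mul_assoc, Matrix.mul_assoc (A i), h.state_mul_proj]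

lemma trace_mul_momentTransfer_proj (h : IsErgodicBlock A P R) (j : ℕ) :
    (R * momentTransfer (dualBranch A) w j P).trace =
      ∑ i, (w i : ℂ) ^ j * (A i * R * (A i)ᴴ).trace.re := by
  simp only [trace_mul_momentTransfer_dualBranch, h.mul_branch_proj,
    ofReal_re_trace_of_posSemidef (h.isDensity.1.mul_mul_conjTranspose_same _)]

lemma exists_poisson_solution_of_centered (h : IsErgodicBlock A P R)
    (hw : ∑ i, w i * (A i * R * (A i)ᴴ).trace.re = 0) :
    ∃ L, L - krausDual A L = momentTransfer (dualBranch A) w 1 P ∧ P * L * P = L := by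
  refine h.exists_poisson_solution (h.compress_momentTransfer (by simp [h.mul_self]) 1) ?_
  rw [h.trace_mul_momentTransfer_proj]
  simpa using congrArg Complex.ofReal hw

lemma realPart_poisson (h : IsErgodicBlock A P R) {L : Matrix (Fin k) (Fin k) ℂ}
    (hL : L - krausDual A L = momentTransfer (dualBranch A) w 1 P) :
    (realPart L : Matrix (Fin k) (Fin k) ℂ) - krausDual A (realPart L) =
      momentTransfer (dualBranch A) w 1 P := by
  have hLstar : Lᴴ - krausDual A Lᴴ = momentTransfer (dualBranch A) w 1 P := by
    rw [krausDual_conjTranspose, ← conjTranspose_sub, hL,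
      conjTranspose_momentTransfer_dualBranch, h.isHermitian.eq]
  rw [realPart_apply_coe, star_eq_conjTranspose, LinearMap.map_smul_of_tower, map_add, ← smul_sub,
    add_sub_add_comm, hL, hLstar, ← two_smul ℝ, inv_smul_smul₀ two_ne_zero]

/-- The second-order equation is solvable precisely because its right-hand side has vanishing
trace against `R`, which is the formula for the variance. -/
lemma exists_isEigenExpansion (h : IsErgodicBlock A P R) {L : Matrix (Fin k) (Fin k) ℂ}
    (hL : L - krausDual A L = momentTransfer (dualBranch A) w 1 P) (hLP : P * L * P = L) :
    ∃ M, IsEigenExpansion (dualBranch A) w (asymptoticVariance A R w L) P (realPart L) M := by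
  set c := asymptoticVariance A R w L with hc
  have hLP' : P * (realPart L : Matrix (Fin k) (Fin k) ℂ) * P = realPart L := by
    have := congrArg conjTranspose hLP
    simp only [conjTranspose_mul, h.isHermitian.eq, ← Matrix.mul_assoc] at this
    rw [realPart_apply_coe, star_eq_conjTranspose, Matrix.mul_smul, Matrix.smul_mul,
      Matrix.mul_add, Matrix.add_mul, hLP, this]
  obtain ⟨M, hM, -⟩ := h.exists_poisson_solution (C := (c / 2 : ℂ) • P -
      (1 / 2 : ℂ) • momentTransfer (dualBranch A) w 2 P -
      momentTransfer (dualBranch A) w 1 (realPart L)) (by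
    simp only [Matrix.mul_sub, Matrix.sub_mul, Matrix.mul_smul, Matrix.smul_mul, h.mul_self,
      h.compress_momentTransfer hLP', h.compress_momentTransfer (V := P) (by simp [h.mul_self])])
    (by
    simp only [Matrix.mul_sub, trace_sub, Matrix.mul_smul, trace_smul,
      h.state_mul_proj, h.isDensity.2, h.trace_mul_momentTransfer_proj,
      trace_mul_momentTransfer_dualBranch,
      trace_mul_realPart_of_isHermitian (h.isDensity.1.mul_mul_conjTranspose_same _).isHermitian]
    simp only [hc, asymptoticVariance, Finset.sum_add_distrib, mul_assoc, ← Finset.mul_sum,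
      smul_eq_mul]
    push_cast
    simp only [pow_one]
    ring)
  exact ⟨M, by rw [momentTransfer_dualBranch_zero, h.krausDual_proj],
    by rw [momentTransfer_dualBranch_zero, h.realPart_poisson hL],
    by rw [momentTransfer_dualBranch_zero, hM]⟩

end IsErgodicBlock

end PoissonEquation

section BornProbability

variable {k : ℕ} {P T : Matrix (Fin k) (Fin k) ℂ}

/-- The probability `Tr (P T)` that the projective measurement `P` succeeds in the state `T`. -/
def bornProb (P T : Matrix (Fin k) (Fin k) ℂ) : ℝ := (P * T).trace.re

lemma trace_mul_nonneg_of_isStarProjection (hP : IsStarProjection P) (hT : T.PosSemidef) :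
    0 ≤ (T * P).trace := by
  have h := (hT.mul_mul_conjTranspose_same P).trace_nonneg
  rwa [← star_eq_conjTranspose, hP.isSelfAdjoint.star_eq, Matrix.mul_assoc, trace_mul_comm,
    Matrix.mul_assoc, hP.isIdempotentElem.eq] at h

lemma ofReal_bornProb (hP : IsStarProjection P) (hT : T.PosSemidef) :
    (bornProb P T : ℂ) = (T * P).trace := by
  rw [bornProb, trace_mul_comm]
  exact (Complex.eq_re_of_ofReal_le (trace_mul_nonneg_of_isStarProjection hP hT)).symm

lemma bornProb_nonneg (hP : IsStarProjection P) (hT : T.PosSemidef) : 0 ≤ bornProb P T := by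
  rw [bornProb, trace_mul_comm]
  exact (Complex.nonneg_iff.mp (trace_mul_nonneg_of_isStarProjection hP hT)).1

lemma sum_bornProb {κ : Type*} [Fintype κ] {P : κ → Matrix (Fin k) (Fin k) ℂ}
    (hP : ∑ j, P j = 1) (hT : IsDensity T) : ∑ j, bornProb (P j) T = 1 := by
  simp only [bornProb]
  rw [← Complex.re_sum, ← trace_sum, ← Finset.sum_mul, hP, one_mul, hT.2, Complex.one_re]

lemma bornProb_le_one (hP : IsStarProjection P) (hT : IsDensity T) : bornProb P T ≤ 1 := by
  have h := bornProb_nonneg hP.one_sub hT.1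
  simp only [bornProb, Matrix.sub_mul, Matrix.one_mul, trace_sub, hT.2, Complex.sub_re,
    Complex.one_re] at h
  exact sub_nonneg.mp h

lemma norm_bornProb_le_one (hP : IsStarProjection P) (hT : IsDensity T) : ‖bornProb P T‖ ≤ 1 := by
  rw [Real.norm_of_nonneg (bornProb_nonneg hP hT.1)]
  exact bornProb_le_one hP hT

end BornProbability

section BlockSelection

namespace IsErgodicBlock

variable {k : ℕ} {ι : Type*} [Fintype ι] {A : ι → Matrix (Fin k) (Fin k) ℂ}
  {P R : Matrix (Fin k) (Fin k) ℂ}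

lemma isStarProjection (h : IsErgodicBlock A P R) : IsStarProjection P :=
  ⟨h.mul_self, h.isHermitian⟩

lemma sum_trace_branch (h : IsErgodicBlock A P R) : ∑ i, (A i * R * (A i)ᴴ).trace.re = 1 := by
  rw [← Complex.re_sum, ← trace_sum, ← krausMap_apply, h.invariant, h.isDensity.2, Complex.one_re]

lemma sum_sub_mean_mul (h : IsErgodicBlock A P R) (f : ι → ℝ) :
    ∑ i, (f i - ∑ i', f i' * (A i' * R * (A i')ᴴ).trace.re) * (A i * R * (A i)ᴴ).trace.re = 0 := by
  simp only [sub_mul, Finset.sum_sub_distrib, ← Finset.mul_sum, h.sum_trace_branch, mul_one,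
    sub_self]

end IsErgodicBlock

variable {k d : ℕ} {Ω : Type} {X : ℕ → Ω → Fin d → ℤ}

lemma eq_add_stepSum {ω : Ω} (hω : ∀ n, ∃ i, X (n + 1) ω = X n ω + dir d i)
    {w : Fin (2 * d) → ℝ} {f : ℕ → ℝ}
    (hf : ∀ n i, X (n + 1) ω = X n ω + dir d i → f (n + 1) = f n + w i) (n : ℕ) :
    f n = f 0 + stepSum X w n ω := by
  induction n with
  | zero => simp [stepSum]
  | succ n ih =>
    obtain ⟨i, hi⟩ := hω n
    rw [hf n i hi, ih, stepSum_succ_of_step hi, add_assoc]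

lemma stepSum_add_const {ω : Ω} (hω : ∀ n, ∃ i, X (n + 1) ω = X n ω + dir d i)
    (w : Fin (2 * d) → ℝ) (c : ℝ) (n : ℕ) :
    stepSum X (fun i => w i + c) n ω = stepSum X w n ω + n * c := by
  have h := eq_add_stepSum hω (w := fun i => w i + c) (f := fun n => stepSum X w n ω + n * c)
    (fun n i hi => by rw [stepSum_succ_of_step hi]; push_cast; ring) n
  simpa [stepSum] using h.symm

lemma mul_le_add_of_eq_add_pi {p q x y : ℝ} (hp : p ∈ Set.Icc (0 : ℝ) 1)
    (hq : q ∈ Set.Icc (0 : ℝ) 1) (hxy : x = y + Real.pi) :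
    p * q ≤ p * (1 - Real.cos x) + q * (1 - Real.cos y) := by
  have hcos : Real.cos x = -Real.cos y := by rw [hxy, Real.cos_add_pi]
  have hx : p * q * (1 - Real.cos x) ≤ p * (1 - Real.cos x) :=
    mul_le_mul_of_nonneg_right (mul_le_of_le_one_right hp.1 hq.2)
      (sub_nonneg.mpr (Real.cos_le_one x))
  have hy : p * q * (1 - Real.cos y) ≤ q * (1 - Real.cos y) :=
    mul_le_mul_of_nonneg_right (mul_le_of_le_one_left hq.1 hp.2)
      (sub_nonneg.mpr (Real.cos_le_one y))
  have hpq : 0 ≤ p * q := mul_nonneg hp.1 hq.1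
  rw [hcos] at hx ⊢
  linarith

namespace IsQTraj

variable {mΩ : MeasurableSpace Ω} {A : Fin (2 * d) → Matrix (Fin k) (Fin k) ℂ}
    {μ : Measure Ω} {ℱ : Filtration ℕ mΩ} {ρ : ℕ → Ω → Matrix (Fin k) (Fin k) ℂ}
    {ρ₀ P P' R R' : Matrix (Fin k) (Fin k) ℂ} {w : Fin (2 * d) → ℝ}

lemma measurable_bornProb (h : IsQTraj A μ ℱ ρ X) (P : Matrix (Fin k) (Fin k) ℂ) (n : ℕ) :
    Measurable fun ω => bornProb P (ρ n ω) := by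
  simp only [bornProb, trace_mul_comm P]
  exact Complex.measurable_re.comp ((h.measurable_trace_mul n P).mono (ℱ.le n) le_rfl)

lemma ae_bornProb_mem_Icc (h : IsQTraj A μ ℱ ρ X) (hP : IsStarProjection P) :
    ∀ᵐ ω ∂μ, ∀ n, bornProb P (ρ n ω) ∈ Set.Icc 0 1 := by
  filter_upwards [ae_all_iff.mpr h.density] with ω hω n
  exact ⟨bornProb_nonneg hP (hω n).1, bornProb_le_one hP (hω n)⟩

lemma aemeasurable_limit_bornProb (h : IsQTraj A μ ℱ ρ X) {p : Ω → ℝ}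
    (hp : ∀ᵐ ω ∂μ, Tendsto (fun n => bornProb P (ρ n ω)) atTop (𝓝 (p ω))) : AEMeasurable p μ :=
  aemeasurable_of_tendsto_metrizable_ae atTop (fun n => (h.measurable_bornProb P n).aemeasurable) hp

lemma ae_limit_bornProb_mem_Icc (h : IsQTraj A μ ℱ ρ X) (hP : IsStarProjection P) {p : Ω → ℝ}
    (hp : ∀ᵐ ω ∂μ, Tendsto (fun n => bornProb P (ρ n ω)) atTop (𝓝 (p ω))) :
    ∀ᵐ ω ∂μ, p ω ∈ Set.Icc 0 1 := by
  filter_upwards [h.ae_bornProb_mem_Icc hP, hp] with ω hω hpω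
  exact isClosed_Icc.mem_of_tendsto hpω (.of_forall hω)

variable [IsProbabilityMeasure μ]

lemma isDensity_init (h : IsQTraj A μ ℱ ρ X) (hinit : ∀ ω, ρ 0 ω = ρ₀) : IsDensity ρ₀ := by
  obtain ⟨ω, hω⟩ := (h.density 0).exists
  exact hinit ω ▸ hω

lemma integrable_bornProb (h : IsQTraj A μ ℱ ρ X) (hP : IsStarProjection P) (n : ℕ) :
    Integrable (fun ω => bornProb P (ρ n ω)) μ := by
  refine .of_bound (h.measurable_bornProb P n).aestronglyMeasurable 1 ?_
  filter_upwards [h.ae_bornProb_mem_Icc hP] with ω hω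
  exact (Real.norm_of_nonneg (hω n).1).trans_le (hω n).2

lemma integral_bornProb (h : IsQTraj A μ ℱ ρ X) (hP : IsErgodicBlock A P R)
    (hinit : ∀ ω, ρ 0 ω = ρ₀) (n : ℕ) : ∫ ω, bornProb P (ρ n ω) ∂μ = bornProb P ρ₀ := by
  have htrace : Integrable (fun ω => (ρ n ω * P).trace) μ := by
    simpa using h.integrable_exp_mul_trace 0 0 n P
  simp only [bornProb, trace_mul_comm P]
  rw [← h.integral_trace_mul_of_krausDual_eq hP.sum_eq_one hinit hP.krausDual_proj n]
  exact integral_re htrace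

lemma tendsto_integral_exp_mul_bornProb (h : IsQTraj A μ ℱ ρ X) (hP : IsErgodicBlock A P R)
    (hinit : ∀ ω, ρ 0 ω = ρ₀) {L : Matrix (Fin k) (Fin k) ℂ}
    (hL : L - krausDual A L = momentTransfer (dualBranch A) w 1 P) (hLP : P * L * P = L)
    {t : ℕ → ℝ} {τ : ℝ} (ht : Tendsto (fun n : ℕ => n * t n ^ 2) atTop (𝓝 τ)) :
    Tendsto (fun n => ∫ ω, Complex.exp (Complex.I * t n * stepSum X w n ω) *
        bornProb P (ρ n ω) ∂μ) atTop
      (𝓝 (Complex.exp (-(asymptoticVariance A R w L * τ / 2)) * bornProb P ρ₀)) := by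
  let _ := Matrix.normedAddCommGroup (m := Fin k) (n := Fin k) (α := ℂ)
  let _ := Matrix.normedSpace (R := ℂ) (m := Fin k) (n := Fin k) (α := ℂ)
  obtain ⟨M, hM⟩ := hP.exists_isEigenExpansion hL hLP
  have key := hM.tendsto_iterate (φ := fun n m => h.twistedExpectation w (t n) m)
    (fun n m V => h.norm_twistedExpectation_le w (t n) m V)
    (fun n => LinearMap.ext fun V => (h.twistedExpectation_zero hinit w (t n) V).trans
      (h.twistedExpectation_zero hinit 0 0 V).symm) ht
    (fun n m V => h.twistedExpectation_succ hP.sum_eq_one w (t n) m V)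
  rw [h.twistedExpectation_zero hinit,
    ← ofReal_bornProb hP.isStarProjection (h.isDensity_init hinit).1] at key
  refine key.congr fun n => integral_congr_ae ?_
  filter_upwards [h.density n] with ω hω
  rw [ofReal_bornProb hP.isStarProjection hω.1]

lemma tendsto_integral_bornProb_mul_one_sub_cos (h : IsQTraj A μ ℱ ρ X)
    (hP : IsErgodicBlock A P R) (hinit : ∀ ω, ρ 0 ω = ρ₀)
    (hw : ∑ i, w i * (A i * R * (A i)ᴴ).trace.re = 0)
    {t : ℕ → ℝ} (ht : Tendsto (fun n : ℕ => n * t n ^ 2) atTop (𝓝 0)) :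
    Tendsto (fun n => ∫ ω, bornProb P (ρ n ω) * (1 - Real.cos (t n * stepSum X w n ω)) ∂μ)
      atTop (𝓝 0) := by
  obtain ⟨L, hL, hLP⟩ := hP.exists_poisson_solution_of_centered hw
  have hlim := (Complex.continuous_re.tendsto _).comp
    (h.tendsto_integral_exp_mul_bornProb hP hinit hL hLP ht)
  have hlim' := hlim.const_sub (bornProb P ρ₀)
  simp only [Complex.ofReal_zero, mul_zero, zero_div, neg_zero, Complex.exp_zero, one_mul,
    Complex.ofReal_re, sub_self] at hlim'
  refine hlim'.congr fun n => ?_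
  have hintegrable : Integrable (fun ω => Complex.exp (Complex.I * t n * stepSum X w n ω) *
      bornProb P (ρ n ω)) μ :=
    ((h.integrable_bornProb hP.isStarProjection n).ofReal).bdd_mul (c := 1)
      ((h.measurable_exp_stepSum w (t n) n).mono (ℱ.le n) le_rfl).aestronglyMeasurable
      (.of_forall fun ω => (norm_exp_I_mul_ofReal_mul_ofReal _ _).le)
  rw [← h.integral_bornProb hP hinit n, Function.comp_apply, ← RCLike.re_eq_complex_re,
    ← integral_re hintegrable,
    ← integral_sub (h.integrable_bornProb hP.isStarProjection n) hintegrable.re]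
  refine integral_congr_ae (.of_forall fun ω => ?_)
  simp [Complex.exp_re]
  ring

lemma integrable_bornProb_mul_one_sub_cos (h : IsQTraj A μ ℱ ρ X) (hP : IsStarProjection P)
    (w : Fin (2 * d) → ℝ) (t : ℝ) (n : ℕ) :
    Integrable (fun ω => bornProb P (ρ n ω) * (1 - Real.cos (t * stepSum X w n ω))) μ := by
  have hS : Measurable (stepSum X w n) := (h.measurable_stepSum w n).mono (ℱ.le n) le_rfl
  refine (h.integrable_bornProb hP n).mul_bdd (c := 2)
    (by fun_prop : Measurable _).aestronglyMeasurable (.of_forall fun ω => ?_)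
  have hcos := Real.cos_mem_Icc (t * stepSum X w n ω)
  rw [Real.norm_of_nonneg (sub_nonneg.mpr hcos.2)]
  linarith [hcos.1]

lemma integral_bornProb_mul_bornProb_le (h : IsQTraj A μ ℱ ρ X) (hA : ∑ i, (A i)ᴴ * A i = 1)
    (hP : IsStarProjection P) (hP' : IsStarProjection P') (w : Fin (2 * d) → ℝ) {t c : ℝ} {n : ℕ}
    (hphase : t * (n * c) = Real.pi) :
    ∫ ω, bornProb P (ρ n ω) * bornProb P' (ρ n ω) ∂μ ≤
      ∫ ω, bornProb P (ρ n ω) *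
          (1 - Real.cos (t * stepSum X (fun i => w i + c) n ω)) ∂μ +
        ∫ ω, bornProb P' (ρ n ω) * (1 - Real.cos (t * stepSum X w n ω)) ∂μ := by
  have hintegrable := h.integrable_bornProb_mul_one_sub_cos hP (fun i => w i + c) t n
  have hintegrable' := h.integrable_bornProb_mul_one_sub_cos hP' w t n
  rw [← integral_add hintegrable hintegrable']
  refine integral_mono_of_nonneg ?_ (hintegrable.add hintegrable') ?_ <;>
  filter_upwards [h.ae_bornProb_mem_Icc hP, h.ae_bornProb_mem_Icc hP', h.ae_exists_step hA]
    with ω hω hω' hstep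
  · exact mul_nonneg (hω n).1 (hω' n).1
  · exact mul_le_add_of_eq_add_pi (hω n) (hω' n)
      (by rw [stepSum_add_const hstep, mul_add, hphase])

/-- The empirical frequency of a step `i` at which the blocks differ cannot be close to both
limits: for `t = π / (n δ)` the phases of the two centered counts differ by exactly `π`. -/
lemma tendsto_integral_bornProb_mul_bornProb (h : IsQTraj A μ ℱ ρ X)
    (hP : IsErgodicBlock A P R) (hP' : IsErgodicBlock A P' R') (hinit : ∀ ω, ρ 0 ω = ρ₀)
    (hne : (fun i => (A i * R * (A i)ᴴ).trace.re) ≠ fun i => (A i * R' * (A i)ᴴ).trace.re) :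
    Tendsto (fun n => ∫ ω, bornProb P (ρ n ω) * bornProb P' (ρ n ω) ∂μ) atTop (𝓝 0) := by
  obtain ⟨i, hi⟩ := Function.ne_iff.mp hne
  set m := (A i * R * (A i)ᴴ).trace.re with hm
  set m' := (A i * R' * (A i)ᴴ).trace.re with hm'
  let w (a : Fin (2 * d)) : ℝ := (Pi.single i 1 : Fin (2 * d) → ℝ) a - m'
  let t (n : ℕ) : ℝ := Real.pi / (m' - m) / n
  have hδ : m' - m ≠ 0 := sub_ne_zero.mpr hi.symm
  have ht : Tendsto (fun n : ℕ => n * t n ^ 2) atTop (𝓝 0) := by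
    refine (tendsto_const_div_atTop_nhds_zero_nat ((Real.pi / (m' - m)) ^ 2)).congr' ?_
    filter_upwards [eventually_ne_atTop 0] with n hn
    simp only [t]
    field_simp
  have hlim := h.tendsto_integral_bornProb_mul_one_sub_cos hP hinit
    (w := fun a => w a + (m' - m))
    (by simpa [Pi.single_apply, w, hm] using hP.sum_sub_mean_mul (Pi.single i 1)) ht
  have hlim' := h.tendsto_integral_bornProb_mul_one_sub_cos hP' hinit (w := w)
    (by simpa [Pi.single_apply, w, hm'] using hP'.sum_sub_mean_mul (Pi.single i 1)) ht
  refine squeeze_zero' (.of_forall fun n => integral_nonneg_of_ae ?_) ?_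
    (by simpa using hlim.add hlim')
  · filter_upwards [h.ae_bornProb_mem_Icc hP.isStarProjection,
      h.ae_bornProb_mem_Icc hP'.isStarProjection] with ω hω hω'
    exact mul_nonneg (hω n).1 (hω' n).1
  · filter_upwards [eventually_ne_atTop 0] with n hn
    exact h.integral_bornProb_mul_bornProb_le hP.sum_eq_one hP.isStarProjection
      hP'.isStarProjection w (by simp only [t]; field_simp)

section Limit

variable {κ : Type*} [Fintype κ] {Q S : κ → Matrix (Fin k) (Fin k) ℂ} {p : Ω → ℝ}

lemma tendsto_integral_bornProb_mul_one_sub (h : IsQTraj A μ ℱ ρ X)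
    (hQ : ∀ j, IsErgodicBlock A (Q j) (S j)) (hsum : ∑ j, Q j = 1)
    (hne : Pairwise fun j j' => (fun i => (A i * S j * (A i)ᴴ).trace.re) ≠
      fun i => (A i * S j' * (A i)ᴴ).trace.re) (hinit : ∀ ω, ρ 0 ω = ρ₀) (j : κ) :
    Tendsto (fun n => ∫ ω, bornProb (Q j) (ρ n ω) * (1 - bornProb (Q j) (ρ n ω)) ∂μ)
      atTop (𝓝 0) := by
  classical
  have hcross := tendsto_finsetSum (univ.erase j) fun j' hj' =>
    h.tendsto_integral_bornProb_mul_bornProb (hQ j) (hQ j') hinit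
      (hne (Finset.ne_of_mem_erase hj').symm)
  rw [Finset.sum_const_zero] at hcross
  refine hcross.congr fun n => ?_
  have hintegrable (j') := (h.integrable_bornProb (hQ j').isStarProjection n).bdd_mul (c := 1)
    (h.measurable_bornProb (Q j) n).aestronglyMeasurable (by
      filter_upwards [h.density n] with ω hω
      exact norm_bornProb_le_one (hQ j).isStarProjection hω)
  rw [← integral_finsetSum _ fun j' _ => hintegrable j']
  refine integral_congr_ae ?_
  filter_upwards [h.density n] with ω hω
  rw [← Finset.mul_sum, ← sum_bornProb hsum hω, ← Finset.sum_erase_eq_sub (mem_univ j)]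

lemma integral_limit_bornProb (h : IsQTraj A μ ℱ ρ X) (hP : IsErgodicBlock A P R)
    (hinit : ∀ ω, ρ 0 ω = ρ₀)
    (hp : ∀ᵐ ω ∂μ, Tendsto (fun n => bornProb P (ρ n ω)) atTop (𝓝 (p ω))) :
    ∫ ω, p ω ∂μ = bornProb P ρ₀ := by
  refine tendsto_nhds_unique (tendsto_integral_of_dominated_convergence (fun _ => 1)
    (fun n => (h.measurable_bornProb P n).aestronglyMeasurable) (integrable_const 1) (fun n => ?_)
    hp) (by simp only [h.integral_bornProb hP hinit, tendsto_const_nhds])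
  filter_upwards [h.density n] with ω hω
  exact norm_bornProb_le_one hP.isStarProjection hω

lemma ae_limit_bornProb_eq_zero_or_one (h : IsQTraj A μ ℱ ρ X)
    (hQ : ∀ j, IsErgodicBlock A (Q j) (S j)) (hsum : ∑ j, Q j = 1)
    (hne : Pairwise fun j j' => (fun i => (A i * S j * (A i)ᴴ).trace.re) ≠
      fun i => (A i * S j' * (A i)ᴴ).trace.re) (hinit : ∀ ω, ρ 0 ω = ρ₀) {j : κ}
    (hp : ∀ᵐ ω ∂μ, Tendsto (fun n => bornProb (Q j) (ρ n ω)) atTop (𝓝 (p ω))) :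
    ∀ᵐ ω ∂μ, p ω = 0 ∨ p ω = 1 := by
  have hmem := h.ae_bornProb_mem_Icc (hQ j).isStarProjection
  have p_mem := h.ae_limit_bornProb_mem_Icc (hQ j).isStarProjection hp
  have norm_le {x : ℝ} (hx : x ∈ Set.Icc (0 : ℝ) 1) : ‖x * (1 - x)‖ ≤ 1 := by
    rw [Real.norm_of_nonneg (mul_nonneg hx.1 (sub_nonneg.mpr hx.2))]
    nlinarith [hx.1, hx.2]
  have hmeas := h.aemeasurable_limit_bornProb hp
  have integral_eq_zero : ∫ ω, p ω * (1 - p ω) ∂μ = 0 := by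
    refine tendsto_nhds_unique (tendsto_integral_of_dominated_convergence (fun _ => 1)
      (fun n => ?_) (integrable_const 1) (fun n => hmem.mono fun ω hω => norm_le (hω n))
      (hp.mono fun ω hω => hω.mul (hω.const_sub 1)))
      (h.tendsto_integral_bornProb_mul_one_sub hQ hsum hne hinit j)
    have := h.measurable_bornProb (Q j) n
    exact (by fun_prop : Measurable _).aestronglyMeasurable
  have ae_zero := (integral_eq_zero_iff_of_nonneg_ae
    (p_mem.mono fun ω hω => mul_nonneg hω.1 (sub_nonneg.mpr hω.2))
    (.of_bound (hmeas.mul (hmeas.const_sub 1)).aestronglyMeasurable 1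
      (p_mem.mono fun ω hω => norm_le hω))).mp integral_eq_zero
  filter_upwards [ae_zero] with ω hω
  exact (mul_eq_zero.mp hω).imp_right fun h => (sub_eq_zero.mp h).symm

end Limit

end IsQTraj

end BlockSelection

section Covariance

variable {k d : ℕ}

lemma dirR_eq_ite_sub_ite (i : Fin (2 * d)) (r : Fin d) :
    dirR d i r = (if i = lo r then 1 else 0) - if i = hi r then 1 else 0 := by
  have := i.isLt
  have := r.isLt
  simp only [dirR, dir, lo, hi, Fin.ext_iff]
  split_ifs <;> first | omega | simp

lemma sum_dirR_mul (r : Fin d) (f : Fin (2 * d) → ℝ) :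
    ∑ i, dirR d i r * f i = f (lo r) - f (hi r) := by
  simp [dirR_eq_ite_sub_ite, sub_mul, Finset.sum_sub_distrib]

lemma sum_dirR_mul_dirR_mul (r s : Fin d) (f : Fin (2 * d) → ℝ) :
    ∑ i, dirR d i r * (dirR d i s * f i) = if r = s then f (lo r) + f (hi r) else 0 := by
  have := r.isLt
  have := s.isLt
  rw [sum_dirR_mul]
  simp only [dirR_eq_ite_sub_ite, lo, hi, Fin.ext_iff]
  split_ifs <;> first | omega | ring

/-- The increment, in the direction `l`, of the centered walk `X n - n • mvec A R` when it makes
the step `dir d i`. -/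
def centeredIncrement (A : Fin (2 * d) → Matrix (Fin k) (Fin k) ℂ) (R : Matrix (Fin k) (Fin k) ℂ)
    (l : Fin d → ℝ) (i : Fin (2 * d)) : ℝ :=
  ∑ r, l r * (dirR d i r - mvec A R r)

lemma sum_sum_mul_mul_eq_sum_sq {ι κ : Type*} [Fintype ι] [Fintype κ] (l : κ → ℝ)
    (D τ : ι → κ → ℝ) (q : ι → ℝ) :
    ∑ r, ∑ s, l r * (∑ i, (D i r * D i s * q i + D i r * τ i s + D i s * τ i r)) * l s =
      ∑ i, ((∑ r, l r * D i r) ^ 2 * q i + 2 * (∑ r, l r * D i r) * ∑ s, l s * τ i s) := by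
  simp only [Finset.mul_sum (s := univ (α := ι)), Finset.sum_mul (s := univ (α := ι))]
  calc ∑ r, ∑ s, ∑ i, l r * (D i r * D i s * q i + D i r * τ i s + D i s * τ i r) * l s
      = ∑ i, ∑ r, ∑ s, l r * (D i r * D i s * q i + D i r * τ i s + D i s * τ i r) * l s := by
        simp only [Finset.sum_comm (γ := ι)]
    _ = ∑ i, ((∑ r, l r * D i r) * (∑ s, l s * D i s) * q i +
          (∑ r, l r * D i r) * (∑ s, l s * τ i s) + (∑ r, l r * τ i r) * ∑ s, l s * D i s) := by
        refine Finset.sum_congr rfl fun i _ => ?_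
        simp only [Finset.sum_mul_sum]
        simp only [Finset.sum_mul, ← Finset.sum_add_distrib]
        exact Finset.sum_congr rfl fun r _ => Finset.sum_congr rfl fun s _ => by ring
    _ = _ := Finset.sum_congr rfl fun i _ => by ring

lemma mul_proj_mul_mul_conjTranspose {P σ : Matrix (Fin k) (Fin k) ℂ} (hP : P.IsHermitian)
    (hσ : P * σ * P = σ) (B : Matrix (Fin k) (Fin k) ℂ) :
    B * P * σ * (B * P)ᴴ = B * σ * Bᴴ := by
  calc B * P * σ * (B * P)ᴴ = B * (P * σ * P) * Bᴴ := by
        simp only [conjTranspose_mul, hP.eq, Matrix.mul_assoc]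
    _ = B * σ * Bᴴ := by rw [hσ]

lemma Cmat_comm (A : Fin (2 * d) → Matrix (Fin k) (Fin k) ℂ) (R : Matrix (Fin k) (Fin k) ℂ)
    (L : Fin d → Matrix (Fin k) (Fin k) ℂ) (r s : Fin d) : Cmat A R L r s = Cmat A R L s r := by
  obtain rfl | hrs := eq_or_ne r s
  · rfl
  · rw [Cmat, Cmat, if_neg hrs, if_neg hrs.symm]
    ring

namespace IsErgodicBlock

variable {A : Fin (2 * d) → Matrix (Fin k) (Fin k) ℂ} {P R : Matrix (Fin k) (Fin k) ℂ}

lemma of_compress (hA : ∑ i, (A i)ᴴ * A i = 1) (hP : P.IsHermitian) (hPP : P * P = P)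
    (hPA : ∀ i, P * A i = A i * P) (hR : IsDensity R) (hRP : P * R * P = R)
    (hinv : ∑ i, A i * P * R * (A i * P)ᴴ = R)
    (huniq : ∀ σ, IsDensity σ → P * σ * P = σ → ∑ i, A i * P * σ * (A i * P)ᴴ = σ → σ = R) :
    IsErgodicBlock A P R where
  isHermitian := hP
  mul_self := hPP
  commute := hPA
  sum_eq_one := hA
  isDensity := hR
  supported := hRP
  invariant := by
    simpa only [krausMap_apply, mul_proj_mul_mul_conjTranspose hP hRP] using hinv
  unique σ hσ hσP hσA := huniq σ hσ hσP (by
    simpa only [krausMap_apply, mul_proj_mul_mul_conjTranspose hP hσP] using hσA)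

lemma Cmat_compress (h : IsErgodicBlock A P R) (L : Fin d → Matrix (Fin k) (Fin k) ℂ) :
    Cmat (fun i => A i * P) R L = Cmat A R L := by
  ext r s
  simp only [Cmat, mvec, mul_proj_mul_mul_conjTranspose h.isHermitian h.supported]

lemma Cmat_eq_sum (h : IsErgodicBlock A P R) (L : Fin d → Matrix (Fin k) (Fin k) ℂ) (r s : Fin d) :
    Cmat A R L r s = ∑ i,
      ((dirR d i r - mvec A R r) * (dirR d i s - mvec A R s) * (A i * R * (A i)ᴴ).trace.re +
        (dirR d i r - mvec A R r) * (A i * R * (A i)ᴴ * L s).trace.re +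
        (dirR d i s - mvec A R s) * (A i * R * (A i)ᴴ * L r).trace.re) := by
  have mean (r : Fin d) : ∑ i, dirR d i r * (A i * R * (A i)ᴴ).trace.re = mvec A R r := by
    simp only [mvec, mul_comm]
  have stationary (s : Fin d) :
      ∑ i, (A i * R * (A i)ᴴ * L s).trace.re = (R * L s).trace.re := by
    rw [← Complex.re_sum, ← trace_sum, ← Finset.sum_mul, ← krausMap_apply, h.invariant]
  calc Cmat A R L r s
      = (∑ i, dirR d i r * (dirR d i s * (A i * R * (A i)ᴴ).trace.re) -
          mvec A R s * ∑ i, dirR d i r * (A i * R * (A i)ᴴ).trace.re -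
          mvec A R r * ∑ i, dirR d i s * (A i * R * (A i)ᴴ).trace.re +
          mvec A R r * mvec A R s * ∑ i, (A i * R * (A i)ᴴ).trace.re) +
        (∑ i, dirR d i r * (A i * R * (A i)ᴴ * L s).trace.re -
          mvec A R r * ∑ i, (A i * R * (A i)ᴴ * L s).trace.re) +
        (∑ i, dirR d i s * (A i * R * (A i)ᴴ * L r).trace.re -
          mvec A R s * ∑ i, (A i * R * (A i)ᴴ * L r).trace.re) := by
        rw [mean, mean, h.sum_trace_branch, stationary, stationary, sum_dirR_mul_dirR_mul,
          sum_dirR_mul, sum_dirR_mul, Cmat]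
        ring
    _ = _ := by
        simp only [Finset.mul_sum, ← Finset.sum_sub_distrib, ← Finset.sum_add_distrib]
        exact Finset.sum_congr rfl fun i _ => by ring

lemma asymptoticVariance_centeredIncrement (h : IsErgodicBlock A P R) (l : Fin d → ℝ)
    (L : Fin d → Matrix (Fin k) (Fin k) ℂ) :
    asymptoticVariance A R (centeredIncrement A R l) (∑ r, l r • L r) =
      ∑ r, ∑ s, l r * Cmat A R L r s * l s := by
  have trace_comb (T : Matrix (Fin k) (Fin k) ℂ) :
      (T * ∑ r, l r • L r).trace.re = ∑ r, l r * (T * L r).trace.re := by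
    simp only [Finset.mul_sum, Matrix.mul_smul, trace_sum, trace_smul, Complex.re_sum,
      Complex.smul_re, smul_eq_mul]
  simp only [h.Cmat_eq_sum, sum_sum_mul_mul_eq_sum_sq, asymptoticVariance, centeredIncrement,
    trace_comb]

lemma sum_smul_dualBranch_proj_sub (h : IsErgodicBlock A P R) (r : Fin d) :
    ∑ i, dirR d i r • dualBranch A i P - mvec A R r • P =
      ∑ i, (dirR d i r - mvec A R r) • dualBranch A i P := by
  have hP : ∑ i, dualBranch A i P = P := by
    simpa only [krausDual, LinearMap.sum_apply] using h.krausDual_proj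
  simp only [sub_smul, Finset.sum_sub_distrib, ← Finset.smul_sum, hP]

lemma poisson_centeredIncrement (h : IsErgodicBlock A P R) (l : Fin d → ℝ)
    {L : Fin d → Matrix (Fin k) (Fin k) ℂ} (hLP : ∀ r, P * L r * P = L r)
    (hL : ∀ r, L r - ∑ i, (A i * P)ᴴ * L r * (A i * P) =
      ∑ i, dirR d i r • ((A i * P)ᴴ * (A i * P)) - mvec A R r • P) :
    ∑ r, l r • L r - krausDual A (∑ r, l r • L r) =
      momentTransfer (dualBranch A) (centeredIncrement A R l) 1 P := by
  have branch_compress {V W : Matrix (Fin k) (Fin k) ℂ} (hV : P * V * P = W) (i : Fin (2 * d)) :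
      (A i * P)ᴴ * V * (A i * P) = dualBranch A i W := by
    rw [← hV, ← compress_dualBranch h.isHermitian (h.commute i), dualBranch_apply,
      conjTranspose_mul, h.isHermitian.eq]
    simp only [Matrix.mul_assoc]
  have poisson (r : Fin d) : L r - krausDual A (L r) =
      ∑ i, (dirR d i r - mvec A R r) • dualBranch A i P := by
    have hproj (i) : (A i * P)ᴴ * (A i * P) = dualBranch A i P := by
      simpa only [Matrix.mul_one] using
        branch_compress (V := 1) (by rw [Matrix.mul_one, h.mul_self]) i
    simpa only [branch_compress (hLP r), hproj, h.sum_smul_dualBranch_proj_sub,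
      krausDual, LinearMap.sum_apply] using hL r
  calc ∑ r, l r • L r - krausDual A (∑ r, l r • L r)
      = ∑ r, l r • (L r - krausDual A (L r)) := by
        simp only [map_sum, LinearMap.map_smul_of_tower, smul_sub, Finset.sum_sub_distrib]
    _ = ∑ r, ∑ i, (l r * (dirR d i r - mvec A R r)) • dualBranch A i P := by
        simp only [poisson, Finset.smul_sum, smul_smul]
    _ = _ := by
        rw [Finset.sum_comm]
        simp only [← Finset.sum_smul, momentTransfer, LinearMap.sum_apply, LinearMap.smul_apply,
          pow_one, centeredIncrement, Complex.coe_smul]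

end IsErgodicBlock

end Covariance

section GaussianLimit

variable {Ω ι : Type*} [Fintype ι]

lemma charFun_map_toLp [MeasurableSpace Ω] {μ : Measure Ω} {Z : Ω → ι → ℝ} (hZ : Measurable Z)
    (t : EuclideanSpace ℝ ι) : charFun (μ.map fun ω => WithLp.toLp 2 (Z ω)) t =
      ∫ ω, Complex.exp (Complex.I * ((∑ r, t r * Z ω r : ℝ) : ℂ)) ∂μ := by
  have hZ' : Measurable fun ω => (WithLp.toLp 2 (Z ω) : EuclideanSpace ℝ ι) := by fun_prop
  rw [charFun_apply, integral_map hZ'.aemeasurable (by fun_prop)]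
  simp only [PiLp.inner_apply, RCLike.inner_apply, conj_trivial, mul_comm Complex.I]

lemma posSemidef_of_tendsto_integral_exp [MeasurableSpace Ω] {μ : Measure Ω}
    [IsProbabilityMeasure μ] {Z : ℕ → Ω → ι → ℝ} {C : Matrix ι ι ℝ} (hC : C.IsHermitian)
    (hlim : ∀ l : ι → ℝ, Tendsto (fun n => ∫ ω, Complex.exp (Complex.I *
      ((∑ r, l r * Z n ω r : ℝ) : ℂ)) ∂μ) atTop
      (𝓝 (Complex.exp (-(((∑ r, ∑ s, l r * C r s * l s) / 2 : ℝ) : ℂ))))) : C.PosSemidef := by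
  refine .of_dotProduct_mulVec_nonneg hC fun l => ?_
  have norm_le : ‖Complex.exp (-(((∑ r, ∑ s, l r * C r s * l s) / 2 : ℝ) : ℂ))‖ ≤ 1 := by
    refine le_of_tendsto' (hlim l).norm fun n => ?_
    refine (norm_integral_le_of_norm_le_const (C := 1) (.of_forall fun ω => ?_)).trans_eq (by simp)
    exact (Complex.norm_exp_I_mul_ofReal _).le
  rw [Complex.norm_exp, Complex.neg_re, Complex.ofReal_re, Real.exp_le_one_iff] at norm_le
  simp only [star_trivial, dotProduct, mulVec, Finset.mul_sum, ← mul_assoc]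
  linarith

lemma charFun_multivariateGaussian_zero [DecidableEq ι] {C : Matrix ι ι ℝ} (hC : C.PosSemidef)
    (t : EuclideanSpace ℝ ι) : charFun (ProbabilityTheory.multivariateGaussian 0 C) t =
      Complex.exp (-(((∑ r, ∑ s, t r * C r s * t s) / 2 : ℝ) : ℂ)) := by
  rw [ProbabilityTheory.charFun_multivariateGaussian hC]
  congr 1
  simp [dotProduct, mulVec, Finset.mul_sum, mul_assoc]

lemma exists_gaussian_of_tendsto_integral_exp [MeasurableSpace Ω] {μ : Measure Ω}
    [IsProbabilityMeasure μ] {Z : ℕ → Ω → ι → ℝ} (hZ : ∀ n, Measurable (Z n)) {C : Matrix ι ι ℝ}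
    (hC : C.IsHermitian)
    (hlim : ∀ l : ι → ℝ, Tendsto (fun n => ∫ ω, Complex.exp (Complex.I *
      ((∑ r, l r * Z n ω r : ℝ) : ℂ)) ∂μ) atTop
      (𝓝 (Complex.exp (-(((∑ r, ∑ s, l r * C r s * l s) / 2 : ℝ) : ℂ))))) :
    ∃ ν : Measure (ι → ℝ), IsProbabilityMeasure ν ∧
      (∀ l : ι → ℝ, ∫ x, Complex.exp (Complex.I * ((∑ r, l r * x r : ℝ) : ℂ)) ∂ν =
        Complex.exp (-(((∑ r, ∑ s, l r * C r s * l s) / 2 : ℝ) : ℂ))) ∧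
      ∀ f : BoundedContinuousFunction (ι → ℝ) ℝ,
        Tendsto (fun n => ∫ ω, f (Z n ω) ∂μ) atTop (𝓝 (∫ x, f x ∂ν)) := by
  classical
  have charFun_gaussian :=
    charFun_multivariateGaussian_zero (posSemidef_of_tendsto_integral_exp hC hlim)
  let γ : ProbabilityMeasure (EuclideanSpace ℝ ι) :=
    ⟨ProbabilityTheory.multivariateGaussian 0 C, inferInstance⟩
  have hofLp : Measurable (WithLp.ofLp : EuclideanSpace ℝ ι → ι → ℝ) := by fun_prop
  have htoLp (n) : Measurable fun ω => (WithLp.toLp 2 (Z n ω) : EuclideanSpace ℝ ι) := by fun_prop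
  let law (n : ℕ) : ProbabilityMeasure (EuclideanSpace ℝ ι) :=
    ⟨μ.map fun ω => WithLp.toLp 2 (Z n ω), Measure.isProbabilityMeasure_map (htoLp n).aemeasurable⟩
  have tendsto_law : Tendsto law atTop (𝓝 γ) := by
    refine ProbabilityMeasure.tendsto_of_tendsto_charFun fun t => ?_
    simpa only [law, γ, ProbabilityMeasure.coe_mk, charFun_map_toLp (hZ _), charFun_gaussian]
      using hlim t
  refine ⟨(γ : Measure (EuclideanSpace ℝ ι)).map WithLp.ofLp,
    Measure.isProbabilityMeasure_map hofLp.aemeasurable, fun l => ?_, fun f => ?_⟩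
  · rw [← charFun_gaussian (WithLp.toLp 2 l),
      integral_map hofLp.aemeasurable (by fun_prop : Measurable _).aestronglyMeasurable,
      ← charFun_map_toLp hofLp (WithLp.toLp 2 l)]
    simp only [WithLp.toLp_ofLp, Measure.map_id', γ, ProbabilityMeasure.coe_mk]
  · rw [integral_map hofLp.aemeasurable f.continuous.aestronglyMeasurable]
    refine (ProbabilityMeasure.tendsto_iff_forall_integral_tendsto.mp tendsto_law
      (f.compContinuous ⟨WithLp.ofLp, by fun_prop⟩)).congr fun n => ?_
    exact integral_map (htoLp n).aemeasurable
      (BoundedContinuousFunction.continuous _).aestronglyMeasurable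

end GaussianLimit

section Conditioning

variable {Ω E : Type*} [MeasurableSpace Ω] {μ : Measure Ω} [NormedAddCommGroup E]
  [NormedSpace ℝ E] {p : Ω → ℝ}

lemma setIntegral_setOf_eq_one (hp : AEMeasurable p μ) (hp01 : ∀ᵐ ω ∂μ, p ω = 0 ∨ p ω = 1)
    (F : Ω → E) : ∫ ω in {ω | p ω = 1}, F ω ∂μ = ∫ ω, p ω • F ω ∂μ := by
  have hset : NullMeasurableSet {ω | p ω = 1} μ :=
    hp.nullMeasurable (measurableSet_singleton 1)
  rw [← integral_indicator₀ hset]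
  refine integral_congr_ae ?_
  filter_upwards [hp01] with ω hω
  rcases hω with hω | hω <;> simp [Set.indicator, hω]

lemma measureReal_setOf_eq_one (hp : AEMeasurable p μ) (hp01 : ∀ᵐ ω ∂μ, p ω = 0 ∨ p ω = 1) :
    μ.real {ω | p ω = 1} = ∫ ω, p ω ∂μ := by
  simpa using setIntegral_setOf_eq_one hp hp01 fun _ => (1 : ℝ)

lemma integral_cond_setOf_eq_one (hp : AEMeasurable p μ) (hp01 : ∀ᵐ ω ∂μ, p ω = 0 ∨ p ω = 1)
    (F : Ω → E) : ∫ ω, F ω ∂ProbabilityTheory.cond μ {ω | p ω = 1} =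
      (∫ ω, p ω ∂μ)⁻¹ • ∫ ω, p ω • F ω ∂μ := by
  rw [ProbabilityTheory.cond, integral_smul_measure, setIntegral_setOf_eq_one hp hp01,
    ← measureReal_setOf_eq_one hp hp01, measureReal_def, ENNReal.toReal_inv]

end Conditioning

section CentralLimit

lemma tendsto_integral_of_ae_tendsto_sub {Ω E : Type*} [MeasurableSpace Ω] {μ : Measure Ω}
    [IsFiniteMeasure μ] [NormedAddCommGroup E] [NormedSpace ℝ E] {F G : ℕ → Ω → E} {c : ℝ} {e : E}
    (hF : ∀ n, AEStronglyMeasurable (F n) μ) (hFc : ∀ n, ∀ᵐ ω ∂μ, ‖F n ω‖ ≤ c)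
    (hG : ∀ n, AEStronglyMeasurable (G n) μ) (hGc : ∀ n, ∀ᵐ ω ∂μ, ‖G n ω‖ ≤ c)
    (hFG : ∀ᵐ ω ∂μ, Tendsto (fun n => F n ω - G n ω) atTop (𝓝 0))
    (he : Tendsto (fun n => ∫ ω, G n ω ∂μ) atTop (𝓝 e)) :
    Tendsto (fun n => ∫ ω, F n ω ∂μ) atTop (𝓝 e) := by
  have hsub : Tendsto (fun n => ∫ ω, F n ω - G n ω ∂μ) atTop (𝓝 (∫ _, 0 ∂μ)) := by
    refine tendsto_integral_of_dominated_convergence (fun _ => c + c) (fun n => (hF n).sub (hG n))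
      (integrable_const _) (fun n => ?_) hFG
    filter_upwards [hFc n, hGc n] with ω hFω hGω
    exact norm_sub_le_of_le hFω hGω
  rw [integral_zero] at hsub
  refine (zero_add e ▸ hsub.add he).congr fun n => ?_
  rw [integral_sub (.of_bound (hF n) c (hFc n)) (.of_bound (hG n) c (hGc n)), sub_add_cancel]

lemma tendsto_inv_sqrt_natCast : Tendsto (fun n : ℕ => (√n)⁻¹) atTop (𝓝 0) :=
  tendsto_inv_atTop_zero.comp (Real.tendsto_sqrt_atTop.comp tendsto_natCast_atTop_atTop)

lemma tendsto_natCast_mul_inv_sqrt_sq : Tendsto (fun n : ℕ => n * (√n)⁻¹ ^ 2) atTop (𝓝 1) := by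
  refine tendsto_const_nhds.congr' ?_
  filter_upwards [eventually_ne_atTop 0] with n hn
  rw [inv_pow, Real.sq_sqrt n.cast_nonneg, mul_inv_cancel₀ (Nat.cast_ne_zero.mpr hn)]

variable {k d : ℕ} {Ω : Type} {X : ℕ → Ω → Fin d → ℤ}

/-- The walk at time `n`, centered at the drift `m` and scaled diffusively: `(X n - n m) / √n`,
with value `0` at `n = 0`. -/
def rescaledWalk (m : Fin d → ℝ) (X : ℕ → Ω → Fin d → ℤ) (n : ℕ) (ω : Ω) : Fin d → ℝ :=
  fun r => ((X n ω r : ℝ) - n * m r) / √n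

lemma sum_mul_rescaledWalk (A : Fin (2 * d) → Matrix (Fin k) (Fin k) ℂ)
    (R : Matrix (Fin k) (Fin k) ℂ) (l : Fin d → ℝ) {ω : Ω}
    (hω : ∀ n, ∃ i, X (n + 1) ω = X n ω + dir d i) (n : ℕ) :
    ∑ r, l r * rescaledWalk (mvec A R) X n ω r =
      (√n)⁻¹ * ∑ r, l r * X 0 ω r + (√n)⁻¹ * stepSum X (centeredIncrement A R l) n ω := by
  have hwalk := eq_add_stepSum (f := fun n => ∑ r, l r * (X n ω r - n * mvec A R r))
    (w := centeredIncrement A R l) hω (fun n i hi => by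
      simp only [hi, centeredIncrement, dirR, ← Finset.sum_add_distrib]
      refine Finset.sum_congr rfl fun r _ => ?_
      push_cast [Pi.add_apply]
      ring) n
  simp only [Nat.cast_zero, zero_mul, sub_zero] at hwalk
  rw [← mul_add, ← hwalk, Finset.mul_sum]
  exact Finset.sum_congr rfl fun r _ => by rw [rescaledWalk]; ring

lemma tendsto_smul_exp_sub_exp_mul {p x : ℝ} {q t S : ℕ → ℝ} (hq : Tendsto q atTop (𝓝 p))
    (ht : Tendsto t atTop (𝓝 0)) :
    Tendsto (fun n => p • Complex.exp (Complex.I * ((t n * x + t n * S n : ℝ) : ℂ)) -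
      Complex.exp (Complex.I * t n * S n) * q n) atTop (𝓝 0) := by
  have hphase : Tendsto (fun n => p * Complex.exp (Complex.I * (t n * x : ℝ)) - q n)
      atTop (𝓝 0) := by
    have hexp : Continuous fun s : ℝ => p * Complex.exp (Complex.I * (s * x : ℝ)) := by fun_prop
    simpa using ((hexp.tendsto 0).comp ht).sub ((Complex.continuous_ofReal.tendsto p).comp hq)
  rw [tendsto_zero_iff_norm_tendsto_zero] at hphase ⊢
  refine hphase.congr fun n => ?_
  rw [← one_mul ‖_ - _‖, ← norm_exp_I_mul_ofReal_mul_ofReal (t n) (S n), ← norm_mul]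
  congr 1
  push_cast [Complex.real_smul]
  rw [mul_add, Complex.exp_add, ← mul_assoc Complex.I (t n : ℂ) (S n : ℂ)]
  ring

namespace IsQTraj

variable {mΩ : MeasurableSpace Ω} {A : Fin (2 * d) → Matrix (Fin k) (Fin k) ℂ}
    {μ : Measure Ω} {ℱ : Filtration ℕ mΩ} {ρ : ℕ → Ω → Matrix (Fin k) (Fin k) ℂ}

lemma measurable_rescaledWalk (h : IsQTraj A μ ℱ ρ X) (m : Fin d → ℝ) (n : ℕ) :
    Measurable (rescaledWalk m X n) := by
  refine measurable_pi_lambda _ fun r => ?_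
  have hX : Measurable fun ω => X n ω r :=
    (measurable_pi_apply r).comp ((h.adapted_X n).mono (ℱ.le n) le_rfl)
  exact ((measurable_from_top.comp hX).sub_const _).div_const _

lemma tendsto_integral_smul_exp_rescaledWalk [IsProbabilityMeasure μ] (h : IsQTraj A μ ℱ ρ X)
    {ρ₀ P R : Matrix (Fin k) (Fin k) ℂ} (hP : IsErgodicBlock A P R) (hinit : ∀ ω, ρ 0 ω = ρ₀)
    {p : Ω → ℝ} (hp : ∀ᵐ ω ∂μ, Tendsto (fun n => bornProb P (ρ n ω)) atTop (𝓝 (p ω)))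
    {L : Fin d → Matrix (Fin k) (Fin k) ℂ} (hLP : ∀ r, P * L r * P = L r)
    (hL : ∀ r, L r - ∑ i, (A i * P)ᴴ * L r * (A i * P) =
      ∑ i, dirR d i r • ((A i * P)ᴴ * (A i * P)) - mvec A R r • P) (l : Fin d → ℝ) :
    Tendsto (fun n => ∫ ω, p ω • Complex.exp (Complex.I *
        ((∑ r, l r * rescaledWalk (mvec A R) X n ω r : ℝ) : ℂ)) ∂μ) atTop
      (𝓝 (bornProb P ρ₀ •
        Complex.exp (-(((∑ r, ∑ s, l r * Cmat A R L r s * l s) / 2 : ℝ) : ℂ)))) := by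
  have hLP' : P * (∑ r, l r • L r) * P = ∑ r, l r • L r := by
    simp only [Finset.mul_sum, Finset.sum_mul, Matrix.mul_smul, Matrix.smul_mul, hLP]
  have hweighted := h.tendsto_integral_exp_mul_bornProb hP hinit
    (hP.poisson_centeredIncrement l hLP hL) hLP' tendsto_natCast_mul_inv_sqrt_sq
  rw [hP.asymptoticVariance_centeredIncrement] at hweighted
  have hlimit : bornProb P ρ₀ •
        Complex.exp (-(((∑ r, ∑ s, l r * Cmat A R L r s * l s) / 2 : ℝ) : ℂ)) =
      Complex.exp (-((∑ r, ∑ s, l r * Cmat A R L r s * l s : ℝ) * (1 : ℝ) / 2)) *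
        bornProb P ρ₀ := by
    rw [Complex.real_smul, mul_comm, Complex.ofReal_div, Complex.ofReal_one, mul_one,
      Complex.ofReal_ofNat]
  rw [hlimit]
  refine tendsto_integral_of_ae_tendsto_sub (c := 1) (fun n => ?_) (fun n => ?_) (fun n => ?_)
    (fun n => ?_) ?_ hweighted
  · have hexp : Measurable fun x : Fin d → ℝ =>
      Complex.exp (Complex.I * ((∑ r, l r * x r : ℝ) : ℂ)) := by fun_prop
    exact ((h.aemeasurable_limit_bornProb hp).smul
      (hexp.comp (h.measurable_rescaledWalk (mvec A R) n)).aemeasurable).aestronglyMeasurable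
  · filter_upwards [h.ae_limit_bornProb_mem_Icc hP.isStarProjection hp] with ω hω
    rw [norm_smul, Complex.norm_exp_I_mul_ofReal, mul_one, Real.norm_of_nonneg hω.1]
    exact hω.2
  · exact (((h.measurable_exp_stepSum _ _ n).mono (ℱ.le n) le_rfl).mul
      (Complex.measurable_ofReal.comp (h.measurable_bornProb P n))).aestronglyMeasurable
  · filter_upwards [h.density n] with ω hω
    rw [norm_mul, norm_exp_I_mul_ofReal_mul_ofReal, one_mul, Complex.norm_real]
    exact norm_bornProb_le_one hP.isStarProjection hω
  · filter_upwards [hp, h.ae_exists_step hP.sum_eq_one] with ω hω hstep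
    simp only [sum_mul_rescaledWalk A R l hstep]
    exact tendsto_smul_exp_sub_exp_mul hω tendsto_inv_sqrt_natCast

end IsQTraj

end CentralLimit

/-- (Conditional CLT in the block-diagonal case.) Under (H1'), (H2),
(H3), conditionally on `{p_∞^{(j)} = 1}` the process `(X_n − n m^{(j)})/√n` converges in
distribution to the Gaussian `N(0, C^{(j)})` on `ℝ^d` (characterized by its
characteristic function), `C^{(j)}` being the covariance matrix of the main CLT computed
for the family `(A_i^{(j)}) = (A_i P_j)` with invariant state `ρ_∞^{(j)}`. -/
theorem stmt18 {k d N : ℕ} (hd : 1 ≤ d)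
    (A : Fin (2 * d) → Matrix (Fin k) (Fin k) ℂ)
    (hA : ∑ j, (A j)ᴴ * A j = 1)
    (P : Fin N → Matrix (Fin k) (Fin k) ℂ)
    (hsa : ∀ j, (P j)ᴴ = P j) (hidem : ∀ j, P j * P j = P j)
    (horth : ∀ j j', j ≠ j' → P j * P j' = 0)
    (hsum : ∑ j, P j = 1)
    (hcomm : ∀ (i : Fin (2 * d)) (j : Fin N), P j * A i = A i * P j)
    (ρinfj : Fin N → Matrix (Fin k) (Fin k) ℂ)
    (hρinfj : ∀ j, IsDensity (ρinfj j) ∧ P j * ρinfj j * P j = ρinfj j)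
    (hinvj : ∀ j, (∑ i, (A i * P j) * ρinfj j * (A i * P j)ᴴ) = ρinfj j)
    (huniqj : ∀ j σ, IsDensity σ → P j * σ * P j = σ →
      (∑ i, (A i * P j) * σ * (A i * P j)ᴴ) = σ → σ = ρinfj j)
    (hm : ∀ j j', j ≠ j' →
      (fun i : Fin (2 * d) => ((A i * ρinfj j * (A i)ᴴ).trace).re) ≠
        (fun i : Fin (2 * d) => ((A i * ρinfj j' * (A i)ᴴ).trace).re))
    {Ω : Type} {mΩ : MeasurableSpace Ω} (μ : Measure Ω) [IsProbabilityMeasure μ]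
    (ℱ : Filtration ℕ mΩ)
    (ρ : ℕ → Ω → Matrix (Fin k) (Fin k) ℂ) (X : ℕ → Ω → Fin d → ℤ)
    (hQT : IsQTraj A μ ℱ ρ X)
    (ρ₀ : Matrix (Fin k) (Fin k) ℂ) (hρ₀ : IsDensity ρ₀)
    (hinit : ∀ ω, ρ 0 ω = ρ₀)
    (j : Fin N) (hp₀ : 0 < ((P j * ρ₀).trace).re)
    (pinf : Ω → ℝ)
    (has : ∀ᵐ ω ∂μ, Tendsto (fun n => ((P j * ρ n ω).trace).re) atTop (nhds (pinf ω)))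
    -- the solutions `L_r^{(j)}` of the Poisson-type equation on `E_j`
    (Lr : Fin d → Matrix (Fin k) (Fin k) ℂ)
    (hLrsupp : ∀ r, P j * Lr r * P j = Lr r)
    (hLr : ∀ r : Fin d,
      Lr r - (∑ i, (A i * P j)ᴴ * Lr r * (A i * P j)) =
        (∑ i, dirR d i r • ((A i * P j)ᴴ * (A i * P j))) -
          (mvec A (ρinfj j) r) • P j) :
    ∃ ν : Measure (Fin d → ℝ), IsProbabilityMeasure ν ∧
      (∀ l : Fin d → ℝ,
        ∫ x, Complex.exp (Complex.I * ((∑ r, l r * x r : ℝ) : ℂ)) ∂ν =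
          Complex.exp
            (-(((∑ r, ∑ s, l r * Cmat (fun i => A i * P j) (ρinfj j) Lr r s * l s) / 2 :
              ℝ) : ℂ))) ∧
      ∀ f : BoundedContinuousFunction (Fin d → ℝ) ℝ,
        Tendsto
          (fun n : ℕ =>
            ∫ ω, f (fun r => ((X n ω r : ℝ) - n * mvec A (ρinfj j) r) / Real.sqrt n)
              ∂(ProbabilityTheory.cond μ {ω | pinf ω = 1}))
          atTop (nhds (∫ x, f x ∂ν)) := by
  have hblock (j) : IsErgodicBlock A (P j) (ρinfj j) := .of_compress hA (hsa j) (hidem j)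
    (hcomm · j) (hρinfj j).1 (hρinfj j).2 (hinvj j) (huniqj j)
  have hpinf : AEMeasurable pinf μ := hQT.aemeasurable_limit_bornProb has
  have hpinf01 : ∀ᵐ ω ∂μ, pinf ω = 0 ∨ pinf ω = 1 :=
    hQT.ae_limit_bornProb_eq_zero_or_one hblock hsum hm hinit has
  have hmean : ∫ ω, pinf ω ∂μ = bornProb (P j) ρ₀ :=
    hQT.integral_limit_bornProb (hblock j) hinit has
  have hmean_ne_zero : bornProb (P j) ρ₀ ≠ 0 := hp₀.ne'
  have hevent : μ {ω | pinf ω = 1} ≠ 0 := by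
    rwa [← measureReal_ne_zero_iff, measureReal_setOf_eq_one hpinf hpinf01, hmean]
  have := ProbabilityTheory.cond_isProbabilityMeasure hevent
  simp only [(hblock j).Cmat_compress Lr]
  refine exists_gaussian_of_tendsto_integral_exp
    (hQT.measurable_rescaledWalk (mvec A (ρinfj j))) (C := .of (Cmat A (ρinfj j) Lr))
    (.ext fun r s => Cmat_comm A (ρinfj j) Lr s r) fun l => ?_
  have hweighted :=
    hQT.tendsto_integral_smul_exp_rescaledWalk (hblock j) hinit has hLrsupp hLr l
  simpa only [integral_cond_setOf_eq_one hpinf hpinf01, hmean, of_apply,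
    inv_smul_smul₀ hmean_ne_zero] using hweighted.const_smul (bornProb (P j) ρ₀)⁻¹
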